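/- arXiv:2505.12866 — 4 statements merged into one kernel-verified Lean document; each statement's English description precedes it below -/
import Mathlib

section
/- Let H be a long prism, a pyramid, a theta, or a broken wheel. Then H contains either P_4 + P_1 or C_4 as an induced subgraph. -/
open SimpleGraph

/-- `u` and `v` are consecutive (in some order) in the list `P`. -/
def ConsecIn {V : Type*} (P : List V) (u v : V) : Prop :=
  ∃ l₁ l₂ : List V, P = l₁ ++ u :: v :: l₂ ∨ P = l₁ ++ v :: u :: l₂

/-- `H` is a prism: it is made of three vertex-disjoint chordless paths `P₁ = a₁…b₁`,
`P₂ = a₂…b₂`, `P₃ = a₃…b₃`, each of length at least 1, such that `{a₁,a₂,a₃}` and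
`{b₁,b₂,b₃}` are triangles and the only edges of `H` are the path edges and the edges of
the two triangles. (Paths are encoded as nodup lists of vertices; the adjacency
characterization forces consecutive list entries to be adjacent and the paths to be
chordless.) -/
def IsPrism {V : Type*} (H : SimpleGraph V) : Prop :=
  ∃ (P₁ P₂ P₃ : List V) (a₁ b₁ a₂ b₂ a₃ b₃ : V),
    P₁.Nodup ∧ P₂.Nodup ∧ P₃.Nodup ∧
    2 ≤ P₁.length ∧ 2 ≤ P₂.length ∧ 2 ≤ P₃.length ∧
    P₁.head? = some a₁ ∧ P₁.getLast? = some b₁ ∧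
    P₂.head? = some a₂ ∧ P₂.getLast? = some b₂ ∧
    P₃.head? = some a₃ ∧ P₃.getLast? = some b₃ ∧
    P₁.Disjoint P₂ ∧ P₁.Disjoint P₃ ∧ P₂.Disjoint P₃ ∧
    (∀ v : V, v ∈ P₁ ∨ v ∈ P₂ ∨ v ∈ P₃) ∧
    (∀ u v : V, H.Adj u v ↔
      ConsecIn P₁ u v ∨ ConsecIn P₂ u v ∨ ConsecIn P₃ u v ∨
      (u ≠ v ∧ u ∈ ({a₁, a₂, a₃} : Set V) ∧ v ∈ ({a₁, a₂, a₃} : Set V)) ∨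
      (u ≠ v ∧ u ∈ ({b₁, b₂, b₃} : Set V) ∧ v ∈ ({b₁, b₂, b₃} : Set V)))

/-- `H` is a long prism: a prism at least one of whose three paths has length at least 2
(i.e. at least 3 vertices). -/
def IsLongPrism {V : Type*} (H : SimpleGraph V) : Prop :=
  ∃ (P₁ P₂ P₃ : List V) (a₁ b₁ a₂ b₂ a₃ b₃ : V),
    P₁.Nodup ∧ P₂.Nodup ∧ P₃.Nodup ∧
    2 ≤ P₁.length ∧ 2 ≤ P₂.length ∧ 2 ≤ P₃.length ∧
    (3 ≤ P₁.length ∨ 3 ≤ P₂.length ∨ 3 ≤ P₃.length) ∧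
    P₁.head? = some a₁ ∧ P₁.getLast? = some b₁ ∧
    P₂.head? = some a₂ ∧ P₂.getLast? = some b₂ ∧
    P₃.head? = some a₃ ∧ P₃.getLast? = some b₃ ∧
    P₁.Disjoint P₂ ∧ P₁.Disjoint P₃ ∧ P₂.Disjoint P₃ ∧
    (∀ v : V, v ∈ P₁ ∨ v ∈ P₂ ∨ v ∈ P₃) ∧
    (∀ u v : V, H.Adj u v ↔
      ConsecIn P₁ u v ∨ ConsecIn P₂ u v ∨ ConsecIn P₃ u v ∨
      (u ≠ v ∧ u ∈ ({a₁, a₂, a₃} : Set V) ∧ v ∈ ({a₁, a₂, a₃} : Set V)) ∨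
      (u ≠ v ∧ u ∈ ({b₁, b₂, b₃} : Set V) ∧ v ∈ ({b₁, b₂, b₃} : Set V)))

/-- `H` is a pyramid: three chordless paths `Pᵢ = a…bᵢ` of length at least 1, at least two
of which have length at least 2, pairwise vertex-disjoint except at the common extremity
`a`, such that `{b₁,b₂,b₃}` is a triangle and the only edges of `H` are the path edges and
the triangle edges. -/
def IsPyramid {V : Type*} (H : SimpleGraph V) : Prop :=
  ∃ (P₁ P₂ P₃ : List V) (a b₁ b₂ b₃ : V),
    P₁.Nodup ∧ P₂.Nodup ∧ P₃.Nodup ∧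
    2 ≤ P₁.length ∧ 2 ≤ P₂.length ∧ 2 ≤ P₃.length ∧
    ((3 ≤ P₁.length ∧ 3 ≤ P₂.length) ∨ (3 ≤ P₁.length ∧ 3 ≤ P₃.length) ∨
      (3 ≤ P₂.length ∧ 3 ≤ P₃.length)) ∧
    P₁.head? = some a ∧ P₂.head? = some a ∧ P₃.head? = some a ∧
    P₁.getLast? = some b₁ ∧ P₂.getLast? = some b₂ ∧ P₃.getLast? = some b₃ ∧
    P₁.tail.Disjoint P₂.tail ∧ P₁.tail.Disjoint P₃.tail ∧ P₂.tail.Disjoint P₃.tail ∧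
    (∀ v : V, v ∈ P₁ ∨ v ∈ P₂ ∨ v ∈ P₃) ∧
    (∀ u v : V, H.Adj u v ↔
      ConsecIn P₁ u v ∨ ConsecIn P₂ u v ∨ ConsecIn P₃ u v ∨
      (u ≠ v ∧ u ∈ ({b₁, b₂, b₃} : Set V) ∧ v ∈ ({b₁, b₂, b₃} : Set V)))

/-- `H` is a theta: three internally vertex-disjoint chordless paths of length at least 2
with common extremities `a` and `b`, whose only edges are the path edges. -/
def IsTheta {V : Type*} (H : SimpleGraph V) : Prop :=
  ∃ (P₁ P₂ P₃ : List V) (a b : V),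
    P₁.Nodup ∧ P₂.Nodup ∧ P₃.Nodup ∧
    3 ≤ P₁.length ∧ 3 ≤ P₂.length ∧ 3 ≤ P₃.length ∧
    a ≠ b ∧
    P₁.head? = some a ∧ P₂.head? = some a ∧ P₃.head? = some a ∧
    P₁.getLast? = some b ∧ P₂.getLast? = some b ∧ P₃.getLast? = some b ∧
    P₁.tail.dropLast.Disjoint P₂.tail.dropLast ∧
    P₁.tail.dropLast.Disjoint P₃.tail.dropLast ∧
    P₂.tail.dropLast.Disjoint P₃.tail.dropLast ∧
    (∀ v : V, v ∈ P₁ ∨ v ∈ P₂ ∨ v ∈ P₃) ∧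
    (∀ u v : V, H.Adj u v ↔ ConsecIn P₁ u v ∨ ConsecIn P₂ u v ∨ ConsecIn P₃ u v)

/-- `H` is a broken wheel: it consists of a hole (chordless cycle of length `n ≥ 4`,
encoded by an injective map `c : ZMod n → V`) together with a center `x` whose neighbors
on the hole are the vertices `c i`, `i ∈ N`, with `|N| ≥ 3`; moreover at least two sectors
(subpaths of the rim between consecutive neighbors of `x`) have length at least 2, which is
expressed by the existence of two non-neighbor rim positions `i ≠ j` such that both open
arcs between them contain a neighbor of `x`. -/
def IsBrokenWheel {V : Type*} (H : SimpleGraph V) : Prop :=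
  ∃ (n : ℕ) (_ : 4 ≤ n) (c : ZMod n → V) (x : V) (N : Set (ZMod n)),
    Function.Injective c ∧ (∀ i, c i ≠ x) ∧
    (∀ v : V, v = x ∨ ∃ i, v = c i) ∧
    3 ≤ N.ncard ∧
    (∀ u v : V, H.Adj u v ↔
      (∃ i : ZMod n, (u = c i ∧ v = c (i + 1)) ∨ (v = c i ∧ u = c (i + 1))) ∨
      (∃ i ∈ N, (u = x ∧ v = c i) ∨ (v = x ∧ u = c i))) ∧
    (∃ i j : ZMod n, i ∉ N ∧ j ∉ N ∧ i ≠ j ∧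
      (∃ k ∈ N, (k - i).val < (j - i).val) ∧
      (∃ k ∈ N, (k - j).val < (i - j).val))

/-- `P_4 + P_1`: the disjoint union of a path on four vertices and an isolated vertex. -/
def P4plusP1 : SimpleGraph (Fin 4 ⊕ Fin 1) := pathGraph 4 ⊕g (⊥ : SimpleGraph (Fin 1))

/-!
Prisms, pyramids and thetas are unions of three paths whose ends are glued either at a common
vertex or by a triangle, so that the adjacency of two vertices can be read off their positions on
the paths. If two of the paths close up to a cycle of length 4, this is an induced `C_4`. Otherwise
two of the paths are long, and there is a `P_4` through an end of two paths such that some vertex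
of the third path has no neighbour on it.

In a wheel, a rim of length at least 7 already contains `P_4 + P_1`. A shorter rim leaves at most
three non-neighbours of the center for two sectors of length at least 2, so one of these sectors has
length exactly 2, and it forms a `C_4` with the center.
-/

/-! ### Recognizing the two induced subgraphs -/

theorem P4plusP1_isIndContained {V : Type*} {H : SimpleGraph V} {a b c d e : V}
    (hab : H.Adj a b) (hbc : H.Adj b c) (hcd : H.Adj c d)
    (hac : ¬ H.Adj a c) (had : ¬ H.Adj a d) (hbd : ¬ H.Adj b d)
    (hae : ¬ H.Adj a e) (hbe : ¬ H.Adj b e) (hce : ¬ H.Adj c e) (hde : ¬ H.Adj d e) :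
    P4plusP1 ⊴ H := by
  have adj_iff : ∀ i j, H.Adj (Sum.elim ![a, b, c, d] ![e] i) (Sum.elim ![a, b, c, d] ![e] j) ↔
      P4plusP1.Adj i j := by
    rintro (i | i) (j | j) <;> fin_cases i <;> fin_cases j <;>
      simp [P4plusP1, pathGraph_adj, H.adj_comm, *]
  -- The prescribed adjacencies already force the five vertices to be distinct.
  have injective : Function.Injective (Sum.elim ![a, b, c, d] ![e]) := by
    have := hab.ne
    have := hbc.ne
    have := hcd.ne
    rintro (i | i) (j | j) <;> fin_cases i <;> fin_cases j <;> simp <;> grind [H.adj_comm]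
  exact ⟨⟨⟨_, injective⟩, adj_iff _ _⟩⟩

theorem cycleGraph_four_isIndContained {V : Type*} {H : SimpleGraph V} {a b c d : V}
    (hab : H.Adj a b) (hbc : H.Adj b c) (hcd : H.Adj c d) (hda : H.Adj d a)
    (hac : ¬ H.Adj a c) (hbd : ¬ H.Adj b d) (hac' : a ≠ c) (hbd' : b ≠ d) :
    cycleGraph 4 ⊴ H := by
  have adj_iff : ∀ i j, H.Adj (![a, b, c, d] i) (![a, b, c, d] j) ↔ (cycleGraph 4).Adj i j := by
    have cycle_adj : ∀ i j : Fin 4, (cycleGraph 4).Adj i j ↔ i ≠ j ∧ i ≠ j + 2 := by decide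
    intro i j
    fin_cases i <;> fin_cases j <;>
      simp [cycle_adj, hab, hab.symm, hbc, hbc.symm, hcd, hcd.symm, hda, hda.symm, hac, hbd,
        H.adj_comm c a, H.adj_comm d b]
  have injective : Function.Injective ![a, b, c, d] := by
    have := hab.ne
    have := hbc.ne
    have := hcd.ne
    have := hda.ne
    intro i j
    fin_cases i <;> fin_cases j <;> simp <;> grind
  exact ⟨⟨⟨_, injective⟩, adj_iff _ _⟩⟩

theorem exists_pair_of_fin_three (p : Fin 3 → Prop) :
    ∃ i j k, i ≠ j ∧ i ≠ k ∧ j ≠ k ∧ (p i ∧ p j ∨ ¬ p i ∧ ¬ p j) := by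
  obtain ⟨i, j, hij, h⟩ := Fintype.exists_ne_map_eq_of_card_lt p (by simp)
  obtain ⟨k, hik, hjk⟩ : ∃ k, i ≠ k ∧ j ≠ k := by
    clear h
    decide +revert
  exact ⟨i, j, k, hij, hik, hjk, by tauto⟩

/-! ### Path configurations -/

/-- A three-path configuration, with the number of paths left arbitrary: `H` is the union of paths
`f i 0, …, f i (ℓ i)`, together with edges making the initial (resp. final) vertices of distinct
paths a clique. The number `s ≤ 1` (resp. `t ≤ 1`) is the distance between the initial (resp.
final) vertices of two distinct paths: `0` if all these vertices coincide, `1` if they are distinct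
and form a clique. With three paths, prisms are the case `(s, t) = (1, 1)`, pyramids `(0, 1)` and
thetas `(0, 0)`. The field `two_le` makes the two ends of a theta non-adjacent. -/
structure IsPathConfig {ι V : Type*} (H : SimpleGraph V) (s t : ℕ) (ℓ : ι → ℕ)
    (f : ι → ℕ → V) : Prop where
  start_le_one : s ≤ 1
  end_le_one : t ≤ 1
  length_pos : ∀ i, 0 < ℓ i
  two_le : ∀ i, 2 ≤ ℓ i + s + t
  eq_iff : ∀ ⦃i j p q⦄, p ≤ ℓ i → q ≤ ℓ j → (f i p = f j q ↔
    i = j ∧ p = q ∨ i ≠ j ∧ (p + q + s = 0 ∨ (ℓ i - p) + (ℓ j - q) + t = 0))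
  adj_iff : ∀ u v, H.Adj u v ↔
    (∃ i, ∃ p < ℓ i, (u = f i p ∧ v = f i (p + 1)) ∨ (v = f i p ∧ u = f i (p + 1))) ∨
    (u ≠ v ∧ (∃ i, u = f i 0) ∧ ∃ i, v = f i 0) ∨
    (u ≠ v ∧ (∃ i, u = f i (ℓ i)) ∧ ∃ i, v = f i (ℓ i))

namespace IsPathConfig

variable {ι V : Type*} {H : SimpleGraph V} {s t : ℕ} {ℓ : ι → ℕ} {f : ι → ℕ → V}
  {i j k : ι} {p q : ℕ}

theorem step_apply_iff (h : IsPathConfig H s t ℓ f) (hp : p ≤ ℓ i) (hq : q ≤ ℓ j) :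
    (∃ k, ∃ r < ℓ k, f i p = f k r ∧ f j q = f k (r + 1)) ↔ i = j ∧ p + 1 = q ∨
      i ≠ j ∧ (s = 0 ∧ p = 0 ∧ q = 1 ∨ t = 0 ∧ p + 1 = ℓ i ∧ q = ℓ j) := by
  constructor
  · rintro ⟨k, r, hr, hu, hv⟩
    have := h.two_le k
    rw [h.eq_iff hp hr.le] at hu
    rw [h.eq_iff hq hr] at hv
    grind
  · rintro (⟨rfl, rfl⟩ | ⟨hij, ⟨hs, rfl, rfl⟩ | ⟨ht, hp', rfl⟩⟩)
    · exact ⟨i, p, hq, rfl, rfl⟩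
    · exact ⟨j, 0, hq, (h.eq_iff hp (by omega)).2 (by grind), rfl⟩
    · exact ⟨i, p, by omega, rfl, (h.eq_iff hq (by omega)).2 (by grind)⟩

theorem exists_eq_start_iff (h : IsPathConfig H s t ℓ f) (hp : p ≤ ℓ i) :
    (∃ k, f i p = f k 0) ↔ p = 0 := by
  refine ⟨fun ⟨k, hk⟩ => ?_, fun hp => ⟨i, by rw [hp]⟩⟩
  have := h.length_pos k
  rw [h.eq_iff hp (Nat.zero_le _)] at hk
  omega

theorem exists_eq_end_iff (h : IsPathConfig H s t ℓ f) (hp : p ≤ ℓ i) :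
    (∃ k, f i p = f k (ℓ k)) ↔ p = ℓ i := by
  refine ⟨fun ⟨k, hk⟩ => ?_, fun hp => ⟨i, by rw [hp]⟩⟩
  have := h.length_pos k
  rw [h.eq_iff hp le_rfl] at hk
  grind

theorem adj_apply_iff (h : IsPathConfig H s t ℓ f) (hp : p ≤ ℓ i) (hq : q ≤ ℓ j) :
    H.Adj (f i p) (f j q) ↔ i = j ∧ (p + 1 = q ∨ q + 1 = p) ∨
      i ≠ j ∧ (p + q + s = 1 ∨ (ℓ i - p) + (ℓ j - q) + t = 1) := by
  have := h.start_le_one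
  have := h.end_le_one
  have := h.length_pos i
  have := h.length_pos j
  simp only [h.adj_iff, and_or_left, exists_or, h.step_apply_iff hp hq, h.step_apply_iff hq hp,
    h.exists_eq_start_iff hp, h.exists_eq_start_iff hq, h.exists_eq_end_iff hp,
    h.exists_eq_end_iff hq, ne_eq, h.eq_iff hp hq]
  obtain rfl | hij := eq_or_ne i j
  · simp only [true_and, not_true, false_and, or_false]
    omega
  · simp only [hij, hij.symm, not_false_iff, false_and, true_and, false_or]
    omega

theorem isIndContained_P4plusP1_of_end_eq_one (h : IsPathConfig H s 1 ℓ f) (hij : i ≠ j)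
    (hik : i ≠ k) (hjk : j ≠ k) (hi : 2 ≤ ℓ i) (hj : 2 ≤ ℓ j) (hq : q < ℓ k)
    (hs : s = 1 ∨ 0 < q ∨ 2 < ℓ i ∧ 2 < ℓ j) : P4plusP1 ⊴ H := by
  apply P4plusP1_isIndContained (a := f i (ℓ i - 1)) (b := f i (ℓ i)) (c := f j (ℓ j))
    (d := f j (ℓ j - 1)) (e := f k q)
  all_goals
    rw [h.adj_apply_iff (by omega) (by omega)]
    grind

theorem isIndContained_P4plusP1_of_three_le (h : IsPathConfig H 0 0 ℓ f) (hij : i ≠ j)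
    (hik : i ≠ k) (hjk : j ≠ k) (hj : 3 ≤ ℓ j) (hk : 3 ≤ ℓ k) : P4plusP1 ⊴ H := by
  have hi := h.two_le i
  apply P4plusP1_isIndContained (a := f i 1) (b := f j 0) (c := f j 1)
    (d := f j 2) (e := f k (ℓ k - 1))
  all_goals
    rw [h.adj_apply_iff (by omega) (by omega)]
    grind

theorem isIndContained_cycleGraph_four_of_length_eq_one (h : IsPathConfig H 1 1 ℓ f)
    (hij : i ≠ j) (hi : ℓ i = 1) (hj : ℓ j = 1) : cycleGraph 4 ⊴ H := by
  apply cycleGraph_four_isIndContained (a := f i 0) (b := f i 1) (c := f j 1) (d := f j 0)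
  case hac' | hbd' =>
    rw [ne_eq, h.eq_iff (by omega) (by omega)]
    grind
  all_goals
    rw [h.adj_apply_iff (by omega) (by omega)]
    grind

theorem isIndContained_cycleGraph_four_of_length_eq_two (h : IsPathConfig H 0 t ℓ f)
    (hij : i ≠ j) (hi : ℓ i = 2) (hj : ℓ j + t = 2) : cycleGraph 4 ⊴ H := by
  have := h.length_pos j
  apply cycleGraph_four_isIndContained (a := f i 0) (b := f i 1) (c := f i 2) (d := f j 1)
  case hac' | hbd' =>
    rw [ne_eq, h.eq_iff (by omega) (by omega)]
    grind
  all_goals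
    rw [h.adj_apply_iff (by omega) (by omega)]
    grind

theorem isIndContained_of_prism {ℓ : Fin 3 → ℕ} {f : Fin 3 → ℕ → V}
    (h : IsPathConfig H 1 1 ℓ f) : P4plusP1 ⊴ H ∨ cycleGraph 4 ⊴ H := by
  obtain ⟨i, j, k, hij, hik, hjk, ⟨hi, hj⟩ | ⟨hi, hj⟩⟩ := exists_pair_of_fin_three (ℓ · = 1)
  · exact .inr (h.isIndContained_cycleGraph_four_of_length_eq_one hij hi hj)
  · have := h.length_pos
    exact .inl (h.isIndContained_P4plusP1_of_end_eq_one hij hik hjk (by grind) (by grind)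
      (h.length_pos k) (.inl rfl))

theorem isIndContained_of_pyramid (h : IsPathConfig H 0 1 ℓ f) (hij : i ≠ j)
    (hik : i ≠ k) (hjk : j ≠ k) (hi : 2 ≤ ℓ i) (hj : 2 ≤ ℓ j) :
    P4plusP1 ⊴ H ∨ cycleGraph 4 ⊴ H := by
  have hP4 {q : ℕ} := h.isIndContained_P4plusP1_of_end_eq_one (q := q) hij hik hjk hi hj
  have hC4 {m : ι} := h.isIndContained_cycleGraph_four_of_length_eq_two (i := m) (j := k)
  obtain hk | hk : ℓ k = 1 ∨ 2 ≤ ℓ k := by have := h.length_pos k; omega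
  · obtain hi' | hi' := hi.eq_or_lt
    · exact .inr (hC4 hik hi'.symm (by omega))
    obtain hj' | hj' := hj.eq_or_lt
    · exact .inr (hC4 hjk hj'.symm (by omega))
    exact .inl (hP4 (h.length_pos k) (.inr (.inr ⟨hi', hj'⟩)))
  · exact .inl (hP4 hk (.inr (.inl one_pos)))

theorem isIndContained_of_theta {ℓ : Fin 3 → ℕ} {f : Fin 3 → ℕ → V}
    (h : IsPathConfig H 0 0 ℓ f) : P4plusP1 ⊴ H ∨ cycleGraph 4 ⊴ H := by
  obtain ⟨i, j, k, hij, hik, hjk, ⟨hi, hj⟩ | ⟨hi, hj⟩⟩ := exists_pair_of_fin_three (ℓ · = 2)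
  · exact .inr (h.isIndContained_cycleGraph_four_of_length_eq_two hij hi hj)
  · have := h.two_le
    exact .inl (h.isIndContained_P4plusP1_of_three_le hik.symm hjk.symm hij (by grind) (by grind))

end IsPathConfig

/-! ### Prisms, pyramids and thetas as path configurations -/

theorem consecIn_iff_getD {V : Type*} {P : List V} {u v : V} (d : V) :
    ConsecIn P u v ↔ ∃ p < P.length - 1,
      (u = P.getD p d ∧ v = P.getD (p + 1) d) ∨ (v = P.getD p d ∧ u = P.getD (p + 1) d) := by
  have append_iff : ∀ u v, (∃ l₁ l₂, P = l₁ ++ u :: v :: l₂) ↔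
      ∃ p < P.length - 1, u = P.getD p d ∧ v = P.getD (p + 1) d := by
    intro u v
    constructor
    · rintro ⟨l₁, l₂, rfl⟩
      exact ⟨l₁.length, by simp, by simp, by simp⟩
    · rintro ⟨p, hp, rfl, rfl⟩
      refine ⟨P.take p, P.drop (p + 2), ?_⟩
      rw [List.getD_eq_getElem _ _ (by omega), List.getD_eq_getElem _ _ (by omega),
        List.getElem_cons_drop, List.getElem_cons_drop, List.take_append_drop]
  simp only [ConsecIn, exists_or, append_iff, and_or_left]

theorem getD_mem {V : Type*} {P : List V} {p : ℕ} {d : V} (hp : p < P.length) :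
    P.getD p d ∈ P := by
  rw [List.getD_eq_getElem _ _ hp]
  exact List.getElem_mem hp

theorem getD_zero_of_head? {V : Type*} {P : List V} {a d : V} (ha : P.head? = some a) :
    P.getD 0 d = a := by
  rw [List.getD_eq_getElem?_getD, ← List.head?_eq_getElem?, ha, Option.getD_some]

theorem getD_length_sub_one_of_getLast? {V : Type*} {P : List V} {b d : V}
    (hb : P.getLast? = some b) : P.getD (P.length - 1) d = b := by
  rw [List.getD_eq_getElem?_getD, ← List.getLast?_eq_getElem?, hb, Option.getD_some]

namespace IsPathConfig

variable {ι V : Type*} {H : SimpleGraph V} {s t : ℕ} {P : ι → List V} {a b : ι → V}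

theorem getD_eq_getD_iff_of_ne {i j : ι} {p q : ℕ} (nodup : ∀ i, (P i).Nodup)
    (head : ∀ i, (P i).head? = some (a i)) (getLast : ∀ i, (P i).getLast? = some (b i))
    (start_eq : s = 0 → ∀ i j, a i = a j) (end_eq : t = 0 → ∀ i j, b i = b j)
    (meet : ∀ i j, i ≠ j → ∀ v ∈ P i, v ∈ P j → s = 0 ∧ v = a i ∨ t = 0 ∧ v = b i)
    (hij : i ≠ j) (hp : p < (P i).length) (hq : q < (P j).length) :
    (P i).getD p (a i) = (P j).getD q (a j) ↔
      p + q + s = 0 ∨ ((P i).length - 1 - p) + ((P j).length - 1 - q) + t = 0 := by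
  have start_iff : ∀ {i p}, p < (P i).length → ((P i).getD p (a i) = a i ↔ p = 0) := by
    intro i p hp
    rw [← List.getD_inj (fallback := a i) hp (by omega) (nodup i), getD_zero_of_head? (head i)]
  have end_iff : ∀ {i p}, p < (P i).length →
      ((P i).getD p (a i) = b i ↔ p = (P i).length - 1) := by
    intro i p hp
    rw [← List.getD_inj (fallback := a i) hp (by omega) (nodup i),
      getD_length_sub_one_of_getLast? (getLast i)]
  constructor
  · intro h
    obtain ⟨hs, hi⟩ | ⟨ht, hi⟩ := meet i j hij _ (getD_mem hp) (h ▸ getD_mem hq)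
    · have hj := h.symm.trans (hi.trans (start_eq hs i j))
      rw [start_iff hp] at hi
      rw [start_iff hq] at hj
      omega
    · have hj := h.symm.trans (hi.trans (end_eq ht i j))
      rw [end_iff hp] at hi
      rw [end_iff hq] at hj
      omega
  · rintro (h | h)
    · rw [(start_iff hp).2 (by omega), (start_iff hq).2 (by omega), start_eq (by omega) i j]
    · rw [(end_iff hp).2 (by omega), (end_iff hq).2 (by omega), end_eq (by omega) i j]

theorem of_lists (hs : s ≤ 1) (ht : t ≤ 1) (nodup : ∀ i, (P i).Nodup)
    (two_le : ∀ i, 2 ≤ (P i).length) (three_le : ∀ i, 3 ≤ (P i).length + s + t)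
    (head : ∀ i, (P i).head? = some (a i)) (getLast : ∀ i, (P i).getLast? = some (b i))
    (start_eq : s = 0 → ∀ i j, a i = a j) (end_eq : t = 0 → ∀ i j, b i = b j)
    (meet : ∀ i j, i ≠ j → ∀ v ∈ P i, v ∈ P j → s = 0 ∧ v = a i ∨ t = 0 ∧ v = b i)
    (adj_iff : ∀ u v, H.Adj u v ↔ (∃ i, ConsecIn (P i) u v) ∨
      (u ≠ v ∧ (∃ i, u = a i) ∧ ∃ i, v = a i) ∨ (u ≠ v ∧ (∃ i, u = b i) ∧ ∃ i, v = b i)) :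
    IsPathConfig H s t (fun i => (P i).length - 1) fun i p => (P i).getD p (a i) where
  start_le_one := hs
  end_le_one := ht
  length_pos i := Nat.sub_pos_of_lt (two_le i)
  two_le i := by grind
  eq_iff i j p q hp hq := by
    have := two_le i
    have := two_le j
    obtain rfl | hij := eq_or_ne i j
    · simp only [List.getD_inj (i := p) (j := q) (by omega) (by omega) (nodup i), true_and, ne_eq,
        not_true, false_and, or_false]
    · simp only [getD_eq_getD_iff_of_ne nodup head getLast start_eq end_eq meet hij
        (p := p) (q := q) (by omega) (by omega), hij, false_and, false_or, ne_eq, not_false_iff,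
        true_and]
  adj_iff u v := by
    simp only [adj_iff, fun i => consecIn_iff_getD (P := P i) (u := u) (v := v) (a i),
      getD_zero_of_head? (head _), getD_length_sub_one_of_getLast? (getLast _)]

end IsPathConfig

theorem mem_tail_of_head? {V : Type*} {P : List V} {a v : V} (ha : P.head? = some a) (hv : v ∈ P)
    (hva : v ≠ a) : v ∈ P.tail := by
  obtain ⟨T, rfl⟩ := List.head?_eq_some_iff.1 ha
  exact List.mem_of_ne_of_mem hva hv

theorem mem_dropLast_tail {V : Type*} {P : List V} {a b v : V} (ha : P.head? = some a)
    (hb : P.getLast? = some b) (hv : v ∈ P) (hva : v ≠ a) (hvb : v ≠ b) :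
    v ∈ P.tail.dropLast := by
  have hv' := mem_tail_of_head? ha hv hva
  have := List.length_pos_of_mem hv'
  rw [List.length_tail] at this
  refine List.mem_dropLast_of_mem_of_ne_getLast? hv' ?_
  rw [List.getLast?_tail, if_neg (by omega), hb]
  exact Option.some_injective _ |>.ne hvb

theorem IsPrism.exists_isPathConfig {V : Type*} {H : SimpleGraph V} (h : IsPrism H) :
    ∃ (ℓ : Fin 3 → ℕ) (f : Fin 3 → ℕ → V), IsPathConfig H 1 1 ℓ f := by
  obtain ⟨P₁, P₂, P₃, a₁, b₁, a₂, b₂, a₃, b₃, hP₁, hP₂, hP₃, hl₁, hl₂, hl₃, ha₁, hb₁, ha₂, hb₂,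
    ha₃, hb₃, h₁₂, h₁₃, h₂₃, -, adj_iff⟩ := h
  have disjoint : ∀ i j, i ≠ j → ∀ v ∈ ![P₁, P₂, P₃] i, v ∉ ![P₁, P₂, P₃] j := by
    intro i j hij v hi hj
    have := @h₁₂ v
    have := @h₁₃ v
    have := @h₂₃ v
    fin_cases i <;> fin_cases j <;> simp_all
  have two_le : ∀ i, 2 ≤ (![P₁, P₂, P₃] i).length := by simp [Fin.forall_fin_succ, *]
  refine ⟨_, _, .of_lists (P := ![P₁, P₂, P₃]) (a := ![a₁, a₂, a₃]) (b := ![b₁, b₂, b₃])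
    le_rfl le_rfl ?_ two_le (fun i => by have := two_le i; omega) ?_ ?_ ?_ ?_
    (fun i j hij v hi hj => absurd hj (disjoint i j hij v hi)) ?_⟩
  all_goals simp [Fin.forall_fin_succ, Fin.exists_fin_succ, or_assoc, *]

theorem IsPyramid.exists_isPathConfig {V : Type*} {H : SimpleGraph V} (h : IsPyramid H) :
    ∃ (ℓ : Fin 3 → ℕ) (f : Fin 3 → ℕ → V), IsPathConfig H 0 1 ℓ f ∧
      ∃ i j k, i ≠ j ∧ i ≠ k ∧ j ≠ k ∧ 2 ≤ ℓ i ∧ 2 ≤ ℓ j := by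
  obtain ⟨P₁, P₂, P₃, a, b₁, b₂, b₃, hP₁, hP₂, hP₃, hl₁, hl₂, hl₃, hl, ha₁, ha₂, ha₃, hb₁, hb₂,
    hb₃, h₁₂, h₁₃, h₂₃, -, adj_iff⟩ := h
  have meet : ∀ i j, i ≠ j → ∀ v ∈ ![P₁, P₂, P₃] i, v ∈ ![P₁, P₂, P₃] j → v = a := by
    intro i j hij v hi hj
    by_contra hva
    have := @h₁₂ v
    have := @h₁₃ v
    have := @h₂₃ v
    have := @mem_tail_of_head? V
    fin_cases i <;> fin_cases j <;> simp_all
  have two_long : ∃ i j k : Fin 3, i ≠ j ∧ i ≠ k ∧ j ≠ k ∧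
      2 ≤ (![P₁, P₂, P₃] i).length - 1 ∧ 2 ≤ (![P₁, P₂, P₃] j).length - 1 := by
    obtain ⟨h₁, h₂⟩ | ⟨h₁, h₃⟩ | ⟨h₂, h₃⟩ := hl
    · exact ⟨0, 1, 2, by decide, by decide, by decide, Nat.le_pred_of_lt h₁, Nat.le_pred_of_lt h₂⟩
    · exact ⟨0, 2, 1, by decide, by decide, by decide, Nat.le_pred_of_lt h₁, Nat.le_pred_of_lt h₃⟩
    · exact ⟨1, 2, 0, by decide, by decide, by decide, Nat.le_pred_of_lt h₂, Nat.le_pred_of_lt h₃⟩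
  have not_apex : ∀ u v, ¬ (u ≠ v ∧ u = a ∧ v = a) := fun u v h => h.1 (h.2.1.trans h.2.2.symm)
  refine ⟨_, _, .of_lists (P := ![P₁, P₂, P₃]) (a := fun _ => a) (b := ![b₁, b₂, b₃])
    zero_le_one le_rfl ?_ ?_ ?_ ?_ ?_ ?_ ?_
    (fun i j hij v hi hj => .inl ⟨rfl, meet i j hij v hi hj⟩) ?adj_iff, two_long⟩
  case adj_iff =>
    intro u v
    simp [adj_iff, not_apex, Fin.exists_fin_succ, or_assoc, -ne_eq]
  all_goals simp [Fin.forall_fin_succ, *]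

theorem IsTheta.exists_isPathConfig {V : Type*} {H : SimpleGraph V} (h : IsTheta H) :
    ∃ (ℓ : Fin 3 → ℕ) (f : Fin 3 → ℕ → V), IsPathConfig H 0 0 ℓ f := by
  obtain ⟨P₁, P₂, P₃, a, b, hP₁, hP₂, hP₃, hl₁, hl₂, hl₃, -, ha₁, ha₂, ha₃, hb₁, hb₂, hb₃,
    h₁₂, h₁₃, h₂₃, -, adj_iff⟩ := h
  have meet : ∀ i j, i ≠ j → ∀ v ∈ ![P₁, P₂, P₃] i, v ∈ ![P₁, P₂, P₃] j → v = a ∨ v = b := by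
    intro i j hij v hi hj
    by_contra! hv
    have := @h₁₂ v
    have := @h₁₃ v
    have := @h₂₃ v
    have := @mem_dropLast_tail V
    fin_cases i <;> fin_cases j <;> simp_all
  have three_le : ∀ i, 3 ≤ (![P₁, P₂, P₃] i).length := by simp [Fin.forall_fin_succ, *]
  have not_ends : ∀ c u v : V, ¬ (u ≠ v ∧ u = c ∧ v = c) :=
    fun c u v h => h.1 (h.2.1.trans h.2.2.symm)
  refine ⟨_, _, .of_lists (P := ![P₁, P₂, P₃]) (a := fun _ => a) (b := fun _ => b)
    zero_le_one zero_le_one ?_ (fun i => by have := three_le i; omega) three_le ?_ ?_ ?_ ?_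
    (by simpa using meet) ?adj_iff⟩
  case adj_iff =>
    intro u v
    simp [adj_iff, not_ends, Fin.exists_fin_succ, -ne_eq]
  all_goals simp [Fin.forall_fin_succ, *]

/-! ### Broken wheels -/

theorem ne_add_natCast_of_arc_nonempty {n : ℕ} [NeZero n] {N : Set (ZMod n)} {i j : ZMod n} {d : ℕ}
    (hd : ∀ m < d, i + (m : ZMod n) ∉ N) (hk : ∃ k ∈ N, (k - i).val < (j - i).val) :
    j ≠ i + (d : ZMod n) := by
  rintro rfl
  obtain ⟨k, hkN, hk⟩ := hk
  rw [add_sub_cancel_left, ZMod.val_natCast] at hk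
  apply hd _ (hk.trans_le (Nat.mod_le d n))
  rwa [ZMod.natCast_zmod_val, add_sub_cancel]

theorem ne_and_ne_add_of_arc_nonempty {n : ℕ} [NeZero n] {N : Set (ZMod n)} {i j : ZMod n}
    (hi : i ∉ N) (hk : ∃ k ∈ N, (k - i).val < (j - i).val) :
    j ≠ i ∧ j ≠ i + 1 ∧ (i + 1 ∉ N → j ≠ i + 2) := by
  have ne_add {d : ℕ} := ne_add_natCast_of_arc_nonempty (d := d) (hk := hk)
  refine ⟨by simpa using ne_add (d := 0), by simpa [hi] using ne_add (d := 1), fun hi' => ?_⟩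
  refine mod_cast ne_add (d := 2) fun m hm => ?_
  interval_cases m <;> simpa

theorem exists_sector_of_length_two {n : ℕ} [NeZero n] {N : Set (ZMod n)} {i j : ZMod n}
    (hN : Nᶜ.ncard ≤ 3) (hi : i ∉ N) (hj : j ∉ N) (hk : ∃ k ∈ N, (k - i).val < (j - i).val)
    (hk' : ∃ k ∈ N, (k - j).val < (i - j).val) : ∃ p, p ∈ N ∧ p + 1 ∉ N ∧ p + 2 ∈ N := by
  by_contra! no_sector
  have exists_adj : ∀ p ∉ N, ∃ q ∉ N, q = p + 1 ∨ p = q + 1 := by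
    intro p hp
    by_cases hp' : p - 1 ∈ N
    · refine ⟨p + 1, ?_, .inl rfl⟩
      have := no_sector _ hp' (by rwa [sub_add_cancel])
      rwa [show p - 1 + 2 = p + 1 by ring] at this
    · exact ⟨p - 1, hp', .inr (sub_add_cancel p 1).symm⟩
  obtain ⟨-, hji₁, hji₂⟩ := ne_and_ne_add_of_arc_nonempty hi hk
  obtain ⟨hij, hij₁, hij₂⟩ := ne_and_ne_add_of_arc_nonempty hj hk'
  have : Nontrivial (ZMod n) := ⟨i, j, hij⟩
  obtain ⟨i', hi', hii'⟩ := exists_adj i hi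
  obtain ⟨j', hj', hjj'⟩ := exists_adj j hj
  -- An arc containing a point of `N` excludes `i' = j`, `j' = i` and `i' = j'`.
  have four_ncard : ({i, i', j, j'} : Set (ZMod n)).ncard = 4 := by
    rw [Set.ncard_insert_of_notMem, Set.ncard_insert_of_notMem, Set.ncard_pair] <;>
      grind
  have subset_compl : ({i, i', j, j'} : Set (ZMod n)) ⊆ Nᶜ := by
    simp [Set.insert_subset_iff, *]
  have := Set.ncard_le_ncard subset_compl
  omega

theorem isIndContained_P4plusP1_of_long_hole {n : ℕ} {V : Type*} {H : SimpleGraph V}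
    {c : ZMod n → V} (hn : 7 ≤ n) (rim : ∀ i j, H.Adj (c i) (c j) ↔ j = i + 1 ∨ i = j + 1) :
    P4plusP1 ⊴ H := by
  have rim_natCast : ∀ i j : ℕ, i + 1 < n → j + 1 < n →
      (H.Adj (c i) (c j) ↔ j = i + 1 ∨ i = j + 1) := by
    intro i j hi hj
    rw [rim]
    norm_cast
    rw [ZMod.natCast_eq_natCast_iff', ZMod.natCast_eq_natCast_iff', Nat.mod_eq_of_lt hi,
      Nat.mod_eq_of_lt hj, Nat.mod_eq_of_lt (by omega), Nat.mod_eq_of_lt (by omega)]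
  apply P4plusP1_isIndContained (a := c (0 : ℕ)) (b := c (1 : ℕ)) (c := c (2 : ℕ))
    (d := c (3 : ℕ)) (e := c (5 : ℕ)) <;>
    rw [rim_natCast _ _ (by omega) (by omega)] <;> omega

theorem isIndContained_cycleGraph_four_of_sector {n : ℕ} {V : Type*} {H : SimpleGraph V}
    {c : ZMod n → V} {x : V} {p : ZMod n} (hn : 4 ≤ n) (hc : Function.Injective c)
    (rim : ∀ i j, H.Adj (c i) (c j) ↔ j = i + 1 ∨ i = j + 1) (hp : H.Adj x (c p))
    (hp₁ : x ≠ c (p + 1)) (hp₁' : ¬ H.Adj x (c (p + 1))) (hp₂ : H.Adj x (c (p + 2))) :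
    cycleGraph 4 ⊴ H := by
  have natCast_ne_zero : ∀ m : ℕ, 0 < m → m < n → (m : ZMod n) ≠ 0 := by
    intro m hm hmn h
    exact Nat.not_dvd_of_pos_of_lt hm hmn ((ZMod.natCast_eq_zero_iff m n).1 h)
  apply cycleGraph_four_isIndContained hp ((rim _ _).2 (.inl rfl)) ((rim _ _).2 (.inl (by ring)))
    hp₂.symm hp₁' _ hp₁
  · rw [ne_eq, hc.eq_iff]
    intro h
    exact natCast_ne_zero 2 (by omega) (by omega) (by linear_combination -h)
  · rw [rim]
    rintro (h | h)
    · exact natCast_ne_zero 1 (by omega) (by omega) (by push_cast; linear_combination h)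
    · exact natCast_ne_zero 3 (by omega) (by omega) (by push_cast; linear_combination -h)

theorem IsBrokenWheel.isIndContained {V : Type*} {H : SimpleGraph V} (h : IsBrokenWheel H) :
    P4plusP1 ⊴ H ∨ cycleGraph 4 ⊴ H := by
  obtain ⟨n, hn, c, x, N, hc, hx, -, hN, adj_iff, i, j, hi, hj, -, hk, hk'⟩ := h
  have rim : ∀ i j, H.Adj (c i) (c j) ↔ j = i + 1 ∨ i = j + 1 := by
    intro i j
    simp only [adj_iff, hc.eq_iff, hx, false_and, or_self, and_false, exists_const, or_false]
    grind
  have spoke : ∀ i, H.Adj x (c i) ↔ i ∈ N := by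
    intro i
    simp only [adj_iff, hc.eq_iff, hx, fun i => (hx i).symm, false_and, and_false, or_self,
      exists_const, false_or, true_and, or_false]
    grind
  obtain hn' | hn' := le_or_gt 7 n
  · exact .inl (isIndContained_P4plusP1_of_long_hole hn' rim)
  · have : NeZero n := ⟨by omega⟩
    have card_compl : Nᶜ.ncard ≤ 3 := by
      have := Set.ncard_add_ncard_compl N
      rw [Nat.card_zmod] at this
      omega
    obtain ⟨p, hp, hp₁, hp₂⟩ := exists_sector_of_length_two card_compl hi hj hk hk'
    exact .inr (isIndContained_cycleGraph_four_of_sector hn hc rim ((spoke _).2 hp)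
      (hx _).symm (mt (spoke _).1 hp₁) ((spoke _).2 hp₂))

theorem IsLongPrism.isPrism {V : Type*} {H : SimpleGraph V} (h : IsLongPrism H) : IsPrism H := by
  obtain ⟨P₁, P₂, P₃, a₁, b₁, a₂, b₂, a₃, b₃, hP₁, hP₂, hP₃, hl₁, hl₂, hl₃, -, h⟩ := h
  exact ⟨P₁, P₂, P₃, a₁, b₁, a₂, b₂, a₃, b₃, hP₁, hP₂, hP₃, hl₁, hl₂, hl₃, h⟩

theorem stmt_16_general {V : Type*} (H : SimpleGraph V)
    (h : IsPrism H ∨ IsPyramid H ∨ IsTheta H ∨ IsBrokenWheel H) :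
    Nonempty (P4plusP1 ↪g H) ∨ Nonempty (cycleGraph 4 ↪g H) := by
  obtain prism | pyramid | theta | wheel := h
  · obtain ⟨ℓ, f, hf⟩ := prism.exists_isPathConfig
    exact hf.isIndContained_of_prism
  · obtain ⟨ℓ, f, hf, i, j, k, hij, hik, hjk, hi, hj⟩ := pyramid.exists_isPathConfig
    exact hf.isIndContained_of_pyramid hij hik hjk hi hj
  · obtain ⟨ℓ, f, hf⟩ := theta.exists_isPathConfig
    exact hf.isIndContained_of_theta
  · exact wheel.isIndContained

/-- Let `H` be a long prism, a pyramid, a theta, or a broken wheel. Then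
`H` contains either `P_4 + P_1` or `C_4` as an induced subgraph. -/
theorem stmt_16 {V : Type} (H : SimpleGraph V)
    (h : IsLongPrism H ∨ IsPyramid H ∨ IsTheta H ∨ IsBrokenWheel H) :
    Nonempty (P4plusP1 ↪g H) ∨ Nonempty (cycleGraph 4 ↪g H) :=
  stmt_16_general H (h.imp_left IsLongPrism.isPrism)
end

section
/- Every graph containing no induced subgraph isomorphic to P_4 + P_1 and no induced subgraph isomorphic to C_4 is K_{2,3}-induced-minor-free. -/
open SimpleGraph

/-- `G` is `H`-free: no induced subgraph of `G` is isomorphic to `H`. -/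
def IndFree {W V : Type*} (H : SimpleGraph W) (G : SimpleGraph V) : Prop :=
  IsEmpty (H ↪g G)

/-- `H` is an induced minor of `G`: there is a family of nonempty, pairwise disjoint,
connected branch sets in `G`, one for each vertex of `H`, such that two distinct vertices
of `H` are adjacent iff there is an edge of `G` between the corresponding branch sets.
(This is the standard model characterization of obtaining an isomorphic copy of `H` from
`G` by vertex deletions and edge contractions.) -/
def InducedMinor {W V : Type*} (H : SimpleGraph W) (G : SimpleGraph V) : Prop :=
  ∃ B : W → Set V,
    (∀ i, (B i).Nonempty) ∧
    (∀ i, (G.induce (B i)).Connected) ∧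
    (∀ i j, i ≠ j → Disjoint (B i) (B j)) ∧
    (∀ i j, i ≠ j → (H.Adj i j ↔ ∃ u ∈ B i, ∃ v ∈ B j, G.Adj u v))

/-!
Let `A, B` and `C₀, C₁, C₂` be the branch sets of a `K_{2,3}` model. In a `P_4 + P_1`-free graph
every vertex has a neighbour on every induced `P_4`, and in a `C_4`-free graph the common neighbours
of two nonadjacent vertices form a clique. As no edge joins `A` to `B`, two nonadjacent vertices
cannot share a neighbour in `A` and another one in `B`.

Each `Cᵢ` contains a vertex `cᵢ` with neighbours in both `A` and `B`: otherwise a short induced path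
leaving the part of `Cᵢ` attached to `A` gives an induced `P_4` with no neighbour of a given vertex
of another `Cⱼ`. By a similar argument, each of `c₀, c₁, c₂` shares a neighbour in `A` with one of
the other two, and likewise in `B`. Hence at least two of the three pairs share a neighbour in `A`
and at least two do in `B`, so some pair does both.
-/

theorem P4plusP1.eq_of_forall_adj_iff (i j : Fin 4 ⊕ Fin 1)
    (h : ∀ k, P4plusP1.Adj i k ↔ P4plusP1.Adj j k) : i = j := by
  revert i j
  simp only [P4plusP1, Sum.forall, pathGraph_adj, sum_adj, bot_adj]
  decide

section

variable {V : Type*} {G : SimpleGraph V}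

theorem IndFree.adj_of_induced_path (h : IndFree P4plusP1 G) {p q r s : V}
    (hpq : G.Adj p q) (hqr : G.Adj q r) (hrs : G.Adj r s)
    (hpr : ¬ G.Adj p r) (hps : ¬ G.Adj p s) (hqs : ¬ G.Adj q s) (w : V) :
    G.Adj p w ∨ G.Adj q w ∨ G.Adj r w ∨ G.Adj s w := by
  by_contra! hw
  let f : Fin 4 ⊕ Fin 1 → V := Sum.elim ![p, q, r, s] ![w]
  have hf : ∀ i j, G.Adj (f i) (f j) ↔ P4plusP1.Adj i j := by
    rintro (i | i) (j | j) <;> fin_cases i <;> fin_cases j <;>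
      simp [f, P4plusP1, pathGraph_adj, hw, G.adj_comm w, hpq, hqr, hrs, hpr, hps, hqs, hpq.symm,
        hqr.symm, hrs.symm, mt Adj.symm hpr, mt Adj.symm hps, mt Adj.symm hqs]
  have hinj : Function.Injective f := fun i j hij =>
    P4plusP1.eq_of_forall_adj_iff i j fun k => by rw [← hf, ← hf, hij]
  exact h.false ⟨⟨f, hinj⟩, hf _ _⟩

theorem IndFree.isClique_commonNeighbors (h : IndFree (cycleGraph 4) G) {d e : V}
    (hde : Gᶜ.Adj d e) : G.IsClique (G.commonNeighbors d e) := by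
  rintro a ⟨hda, hea⟩ b ⟨hdb, heb⟩ hab
  rw [mem_neighborSet] at hda hea hdb heb
  by_contra hnab
  let f : Fin 4 → V := ![d, a, e, b]
  have hf : ∀ i j, G.Adj (f i) (f j) ↔ (cycleGraph 4).Adj i j := fun i j => by
    fin_cases i <;> fin_cases j <;>
      simp +decide [f, hda, hea, hdb, heb, hda.symm, hea.symm, hdb.symm, heb.symm,
        hde.2, hnab, hde.symm.2, mt Adj.symm hnab]
  have hinj : Function.Injective f := by
    rw [← List.nodup_ofFn]
    simp [f, hab, hde.1, hda.ne, hea.ne', hdb.ne, heb.ne]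
  exact h.false ⟨⟨f, hinj⟩, hf _ _⟩

theorem exists_adj_of_preconnected_induce {X Y : Set V} (hX : (G.induce X).Preconnected)
    (hin : (X ∩ Y).Nonempty) (hout : (X \ Y).Nonempty) :
    ∃ u ∈ X ∩ Y, ∃ v ∈ X \ Y, G.Adj u v := by
  obtain ⟨x, hx, hxY⟩ := hin
  obtain ⟨y, hy, hyY⟩ := hout
  obtain ⟨p⟩ := hX ⟨x, hx⟩ ⟨y, hy⟩
  obtain ⟨d, -, hd, hd'⟩ := p.exists_boundary_dart {z | z.1 ∈ Y} hxY hyY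
  exact ⟨d.fst, ⟨d.fst.2, hd⟩, d.snd, ⟨d.snd.2, hd'⟩, d.adj⟩

theorem exists_adj_or_exists_induced_path {X S T : Set V} (hX : (G.induce X).Preconnected)
    (hSX : S ⊆ X) (hTX : T ⊆ X) (hS : S.Nonempty) (hT : T.Nonempty) (hST : Disjoint S T) :
    (∃ s ∈ S, ∃ t ∈ T, G.Adj s t) ∨
      ∃ s ∈ S, ∃ u ∈ X \ (S ∪ T), ∃ v ∈ X \ S, G.Adj s u ∧ G.Adj u v ∧ ¬ G.Adj s v := by
  by_cases hadj : ∃ s ∈ S, ∃ t ∈ T, G.Adj s t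
  · exact .inl hadj
  · push Not at hadj
    obtain ⟨s₀, hs₀⟩ := hS
    obtain ⟨t₀, ht₀⟩ := hT
    -- Let `u v` be an edge leaving the closed neighbourhood of `S`.
    obtain ⟨u, ⟨hu, huN⟩, v, ⟨hv, hvN⟩, huv⟩ :=
      exists_adj_of_preconnected_induce (Y := S ∪ {z | ∃ s ∈ S, G.Adj s z}) hX
        ⟨s₀, hSX hs₀, .inl hs₀⟩ ⟨t₀, hTX ht₀, by
          rintro (ht₀S | ⟨s, hs, hst₀⟩)
          · exact hST.notMem_of_mem_left ht₀S ht₀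
          · exact hadj s hs t₀ ht₀ hst₀⟩
    have huS : u ∉ S := fun huS => hvN (.inr ⟨u, huS, huv⟩)
    obtain ⟨s, hs, hsu⟩ := huN.resolve_left huS
    have huT : u ∉ T := fun huT => hadj s hs u huT hsu
    exact .inr ⟨s, hs, u, ⟨hu, by simp [huS, huT]⟩, v, ⟨hv, fun hvS => hvN (.inl hvS)⟩, hsu, huv,
      fun hsv => hvN (.inr ⟨s, hs, hsv⟩)⟩

/-- If `a` were adjacent to `d`, the induced path `u s a d` would force the edges `a e` and `u b`,
and then the induced path `e b u s` would have no neighbour of `d`. -/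
theorem not_adj_of_induced_path_of_pendant (h1 : IndFree P4plusP1 G) (h2 : IndFree (cycleGraph 4) G)
    {u s a b d e : V} (hus : G.Adj u s) (hsa : G.Adj s a) (hua : ¬ G.Adj u a)
    (hud : ¬ G.Adj u d) (hsd : ¬ G.Adj s d) (hue : ¬ G.Adj u e) (hse : ¬ G.Adj s e)
    (hde : Gᶜ.Adj d e) (hab : Gᶜ.Adj a b) (heb : G.Adj e b) (hsb : ¬ G.Adj s b) :
    ¬ G.Adj a d := by
  intro had
  have hpath := h1.adj_of_induced_path hus hsa had hua hud hsd
  have hae : G.Adj a e := by simpa [hue, hse, hde.2] using hpath e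
  have hdb : ¬ G.Adj d b := fun hdb =>
    hab.2 (h2.isClique_commonNeighbors hde ⟨had.symm, hae.symm⟩ ⟨hdb, heb⟩ hab.1)
  have hub : G.Adj u b := by simpa [hsb, hab.2, hdb] using hpath b
  have := h1.adj_of_induced_path heb hub.symm hus (mt Adj.symm hue) (mt Adj.symm hse)
    (mt Adj.symm hsb) d
  simp [hde.symm.2, mt Adj.symm hdb, hud, hsd] at this

theorem exists_common_attachment (h1 : IndFree P4plusP1 G) (h2 : IndFree (cycleGraph 4) G)
    {A B C E : Set V} {d : V} (hC : (G.induce C).Preconnected) (hAB : Gᶜ.IsCompleteBetween A B)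
    (hCE : ∀ c ∈ C, ∀ e ∈ E, ¬ G.Adj c e) (hCd : ∀ c ∈ C, ¬ G.Adj c d)
    (hdE : ∀ e ∈ E, Gᶜ.Adj d e)
    (hCA : ∃ c ∈ C, (A ∩ G.neighborSet c).Nonempty) (hCB : ∃ c ∈ C, (B ∩ G.neighborSet c).Nonempty)
    (hEA : ∃ e ∈ E, (A ∩ G.neighborSet e).Nonempty)
    (hEB : ∃ e ∈ E, (B ∩ G.neighborSet e).Nonempty) :
    ∃ c ∈ C, (A ∩ G.neighborSet c).Nonempty ∧ (B ∩ G.neighborSet c).Nonempty := by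
  by_contra! hno
  have hsep : ∀ ⦃c⦄, c ∈ C → ∀ ⦃a⦄, a ∈ A → ∀ ⦃b⦄, b ∈ B → G.Adj c a → ¬ G.Adj c b :=
    fun c hc a ha b hb hca hcb => (hno c hc ⟨a, ha, hca⟩).subset ⟨hb, hcb⟩
  obtain ⟨e, he, b', hb', heb'⟩ := hEB
  obtain ⟨e', he', a', ha', hea'⟩ := hEA
  have far_of_boundary_A : ∀ s ∈ C, ∀ u ∈ C, G.Adj u s → ∀ a ∈ A, G.Adj s a → ¬ G.Adj u a →
      ¬ G.Adj a d := fun s hs u hu hus a ha hsa hua =>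
    not_adj_of_induced_path_of_pendant h1 h2 hus hsa hua (hCd u hu) (hCd s hs) (hCE u hu e he)
      (hCE s hs e he) (hdE e he) (hAB ha hb') heb' (hsep hs ha hb' hsa)
  have far_of_boundary_B : ∀ s ∈ C, ∀ u ∈ C, G.Adj u s → ∀ b ∈ B, G.Adj s b → ¬ G.Adj u b →
      ¬ G.Adj b d := fun s hs u hu hus b hb hsb hub =>
    not_adj_of_induced_path_of_pendant h1 h2 hus hsb hub (hCd u hu) (hCd s hs) (hCE u hu e' he')
      (hCE s hs e' he') (hdE e' he') (hAB ha' hb).symm hea' fun hsa' => hsep hs ha' hb hsa' hsb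
  obtain ⟨s, ⟨hs, a, ha, hsa⟩, t, ⟨ht, b, hb, htb⟩, hst⟩ |
      ⟨s, ⟨hs, a, ha, hsa⟩, u, ⟨hu, huST⟩, v, ⟨hv, hvS⟩, hsu, huv, hsv⟩ :=
    exists_adj_or_exists_induced_path (S := {c ∈ C | (A ∩ G.neighborSet c).Nonempty})
      (T := {c ∈ C | (B ∩ G.neighborSet c).Nonempty}) hC (Set.sep_subset _ _) (Set.sep_subset _ _)
      hCA hCB (Set.disjoint_left.2 fun c ⟨hc, hcA⟩ ⟨_, hcB⟩ => hcB.ne_empty (hno c hc hcA))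
  · have hta : ¬ G.Adj t a := fun hta => hsep ht ha hb hta htb
    have hsb : ¬ G.Adj s b := hsep hs ha hb hsa
    have had := far_of_boundary_A s hs t ht hst.symm a ha hsa hta
    have hbd := far_of_boundary_B t ht s hs hst b hb htb hsb
    have := h1.adj_of_induced_path hsa.symm hst htb (mt Adj.symm hta) (hAB ha hb).2 hsb d
    simp [had, hbd, hCd s hs, hCd t ht] at this
  · have hua : ¬ G.Adj u a := fun hua => huST (.inl ⟨hu, a, ha, hua⟩)
    have hva : ¬ G.Adj v a := fun hva => hvS ⟨hv, a, ha, hva⟩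
    have had := far_of_boundary_A s hs u hu hsu.symm a ha hsa hua
    have := h1.adj_of_induced_path hsa.symm hsu huv (mt Adj.symm hua) (mt Adj.symm hva) hsv d
    simp [had, hCd s hs, hCd u hu, hCd v hv] at this

theorem exists_adj_mem_commonNeighbors (h1 : IndFree P4plusP1 G) {A : Set V} {c d e : V}
    (hA : (G.induce A).Preconnected)
    (hcd : ¬ G.Adj c d) (hce : ¬ G.Adj c e) (hde : ¬ G.Adj d e)
    (hcA : (A ∩ G.neighborSet c).Nonempty) (hdA : (A ∩ G.neighborSet d).Nonempty)
    (hAcd : Disjoint A (G.commonNeighbors c d)) (hAce : Disjoint A (G.commonNeighbors c e)) :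
    ∃ x ∈ A, ∃ t ∈ A ∩ G.commonNeighbors d e, G.Adj x t ∧ ¬ G.Adj x d ∧ ¬ G.Adj x e := by
  have hnd : ∀ z ∈ A, G.Adj c z → ¬ G.Adj z d := fun z hz hcz hzd =>
    Set.disjoint_left.1 hAcd hz ⟨hcz, hzd.symm⟩
  have hne : ∀ z ∈ A, G.Adj c z → ¬ G.Adj z e := fun z hz hcz hze =>
    Set.disjoint_left.1 hAce hz ⟨hcz, hze.symm⟩
  have hST : Disjoint (A ∩ G.neighborSet c) (A ∩ (G.neighborSet d ∪ G.neighborSet e)) :=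
    Set.disjoint_left.2 fun z ⟨hz, hcz⟩ ⟨_, hz'⟩ =>
      hz'.elim (fun hdz => hnd z hz hcz hdz.symm) fun hez => hne z hz hcz hez.symm
  obtain ⟨s, ⟨hs, hcs⟩, t, ⟨ht, htde⟩, hst⟩ |
      ⟨s, ⟨hs, hcs⟩, u, ⟨hu, huST⟩, v, ⟨hv, hvS⟩, hsu, huv, hsv⟩ :=
    exists_adj_or_exists_induced_path hA Set.inter_subset_left Set.inter_subset_left hcA
      (hdA.mono (by gcongr; exact Set.subset_union_left)) hST
  · have hsd := hnd s hs hcs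
    have hse := hne s hs hcs
    have hct : ¬ G.Adj c t := fun hct => Set.disjoint_left.1 hST ⟨ht, hct⟩ ⟨ht, htde⟩
    -- Whichever of `d`, `e` is adjacent to `t` extends `c s t` to an induced path; the other one
    -- must have its neighbour on that path at `t`.
    refine ⟨s, hs, t, ⟨ht, ?_⟩, hst, hsd, hse⟩
    rcases htde with hdt | het
    · have hte : G.Adj t e := by
        simpa [hce, hse, hde] using h1.adj_of_induced_path hcs hst hdt.symm hct hcd hsd e
      exact ⟨hdt, hte.symm⟩
    · have htd : G.Adj t d := by
        simpa [hcd, hsd, mt Adj.symm hde] using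
          h1.adj_of_induced_path hcs hst het.symm hct hce hse d
      exact ⟨htd.symm, het⟩
  · have hcu : ¬ G.Adj c u := fun hcu => huST (.inl ⟨hu, hcu⟩)
    have hcv : ¬ G.Adj c v := fun hcv => hvS ⟨hv, hcv⟩
    have hud : ¬ G.Adj u d := fun hud => huST (.inr ⟨hu, .inl hud.symm⟩)
    have hue : ¬ G.Adj u e := fun hue => huST (.inr ⟨hu, .inr hue.symm⟩)
    have hpath := h1.adj_of_induced_path hcs hsu huv hcu hcv hsv
    have hvd : G.Adj v d := by simpa [hcd, hnd s hs hcs, hud] using hpath d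
    have hve : G.Adj v e := by simpa [hce, hne s hs hcs, hue] using hpath e
    exact ⟨u, hu, v, ⟨hv, hvd.symm, hve.symm⟩, huv, hud, hue⟩

theorem notMem_commonNeighbors_of_adj (h1 : IndFree P4plusP1 G) (h2 : IndFree (cycleGraph 4) G)
    {B : Set V} {x t d e : V} (hxt : G.Adj x t) (hxd : ¬ G.Adj x d) (hxe : ¬ G.Adj x e)
    (hde : Gᶜ.Adj d e) (hxB : ∀ b ∈ B, ¬ G.Adj x b) (htB : ∀ b ∈ B, Gᶜ.Adj t b)
    (hdB : (B ∩ G.neighborSet d).Nonempty) (heB : (B ∩ G.neighborSet e).Nonempty) :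
    t ∉ G.commonNeighbors d e := by
  rintro ⟨hdt, het⟩
  obtain ⟨b, hb, hdb⟩ := hdB
  obtain ⟨b', hb', heb'⟩ := heB
  have not_common : ∀ z ∈ B, ¬ (G.Adj d z ∧ G.Adj e z) := fun z hz hdez =>
    (htB z hz).2 (h2.isClique_commonNeighbors hde ⟨hdt, het⟩ hdez (htB z hz).1)
  have hdb' : ¬ G.Adj d b' := fun h => not_common b' hb' ⟨h, heb'⟩
  have heb : ¬ G.Adj e b := fun h => not_common b hb ⟨hdb, h⟩
  by_cases hbb' : G.Adj b b'
  · have := h1.adj_of_induced_path hdb hbb' heb'.symm hdb' hde.2 (mt Adj.symm heb) x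
    simp [G.adj_comm _ x, hxd, hxe, hxB b hb, hxB b' hb'] at this
  · have := h1.adj_of_induced_path hxt hdt.symm hdb hxd (hxB b hb) (htB b hb).2 b'
    simp [hxB b' hb', (htB b' hb').2, hdb', hbb'] at this

theorem exists_common_neighbor (h1 : IndFree P4plusP1 G) (h2 : IndFree (cycleGraph 4) G)
    {A B : Set V} (hA : (G.induce A).Preconnected) (hAB : Gᶜ.IsCompleteBetween A B) {c d e : V}
    (hcd : ¬ G.Adj c d) (hce : ¬ G.Adj c e) (hde : Gᶜ.Adj d e)
    (hcA : (A ∩ G.neighborSet c).Nonempty) (hdA : (A ∩ G.neighborSet d).Nonempty)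
    (hdB : (B ∩ G.neighborSet d).Nonempty) (heB : (B ∩ G.neighborSet e).Nonempty) :
    (A ∩ G.commonNeighbors c d).Nonempty ∨ (A ∩ G.commonNeighbors c e).Nonempty := by
  by_contra! hno
  obtain ⟨x, hx, t, ⟨ht, htde⟩, hxt, hxd, hxe⟩ :=
    exists_adj_mem_commonNeighbors h1 hA hcd hce hde.2 hcA hdA
      (Set.disjoint_iff_inter_eq_empty.2 hno.1) (Set.disjoint_iff_inter_eq_empty.2 hno.2)
  exact notMem_commonNeighbors_of_adj h1 h2 hxt hxd hxe hde (fun b hb => (hAB hx hb).2)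
    (fun b hb => hAB ht hb) hdB heB htde

theorem not_three_common_attachments (h1 : IndFree P4plusP1 G) (h2 : IndFree (cycleGraph 4) G)
    {A B : Set V} (hA : (G.induce A).Preconnected) (hB : (G.induce B).Preconnected)
    (hAB : Gᶜ.IsCompleteBetween A B) {c : Fin 3 → V} (hc : Pairwise fun i j => Gᶜ.Adj (c i) (c j))
    (hcA : ∀ i, (A ∩ G.neighborSet (c i)).Nonempty) :
    ¬ ∀ i, (B ∩ G.neighborSet (c i)).Nonempty := by
  intro hcB
  have sharesA : ∀ i j k, i ≠ j → i ≠ k → j ≠ k →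
      (A ∩ G.commonNeighbors (c i) (c j)).Nonempty ∨
        (A ∩ G.commonNeighbors (c i) (c k)).Nonempty := fun i j k hij hik hjk =>
    exists_common_neighbor h1 h2 hA hAB (hc hij).2 (hc hik).2 (hc hjk) (hcA i) (hcA j) (hcB j)
      (hcB k)
  have sharesB : ∀ i j k, i ≠ j → i ≠ k → j ≠ k →
      (B ∩ G.commonNeighbors (c i) (c j)).Nonempty ∨
        (B ∩ G.commonNeighbors (c i) (c k)).Nonempty := fun i j k hij hik hjk =>
    exists_common_neighbor h1 h2 hB hAB.symm (hc hij).2 (hc hik).2 (hc hjk) (hcB i) (hcB j) (hcA j)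
      (hcA k)
  have not_both : ∀ i j, i ≠ j → (A ∩ G.commonNeighbors (c i) (c j)).Nonempty →
      ¬ (B ∩ G.commonNeighbors (c i) (c j)).Nonempty := fun i j hij ⟨a, ha, haij⟩ ⟨b, hb, hbij⟩ =>
    (hAB ha hb).2 (h2.isClique_commonNeighbors (hc hij) haij hbij (hAB ha hb).1)
  grind [sharesA 0 1 2, sharesA 1 0 2, sharesA 2 0 1, sharesB 0 1 2, sharesB 1 0 2, sharesB 2 0 1,
    not_both 0 1, not_both 0 2, not_both 1 2, G.commonNeighbors_symm]

end

theorem stmt_17_general {V : Type*} (G : SimpleGraph V)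
    (h1 : IndFree P4plusP1 G) (h2 : IndFree (cycleGraph 4) G) :
    ¬ InducedMinor (completeBipartiteGraph (Fin 2) (Fin 3)) G := by
  rintro ⟨M, -, hconn, hdisj, hadj⟩
  have far : ∀ i j, i ≠ j → ¬ (completeBipartiteGraph (Fin 2) (Fin 3)).Adj i j →
      Gᶜ.IsCompleteBetween (M i) (M j) := fun i j hij hnadj u hu v hv =>
    ⟨(hdisj i j hij).ne_of_mem hu hv, fun huv => hnadj ((hadj i j hij).2 ⟨u, hu, v, hv, huv⟩)⟩
  have far_left : Gᶜ.IsCompleteBetween (M (.inl 0)) (M (.inl 1)) := far _ _ (by simp) (by simp)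
  have far_right : ∀ i j : Fin 3, i ≠ j → Gᶜ.IsCompleteBetween (M (.inr i)) (M (.inr j)) :=
    fun i j hij => far _ _ (by simpa using hij) (by simp)
  have attached : ∀ (i : Fin 3) (k : Fin 2),
      ∃ c ∈ M (.inr i), (M (.inl k) ∩ G.neighborSet c).Nonempty :=
    fun i k => (hadj (.inr i) (.inl k) (by simp)).1 (by simp)
  have common : ∀ i : Fin 3, ∃ c ∈ M (.inr i),
      (M (.inl 0) ∩ G.neighborSet c).Nonempty ∧ (M (.inl 1) ∩ G.neighborSet c).Nonempty := by
    intro i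
    obtain ⟨j, k, hij, hik, hjk⟩ : ∃ j k, i ≠ j ∧ i ≠ k ∧ j ≠ k := by decide +revert
    obtain ⟨⟨d, hd⟩⟩ := (hconn (.inr j)).nonempty
    exact exists_common_attachment h1 h2 (hconn _).preconnected far_left
      (fun c hc e he => (far_right i k hik hc he).2) (fun c hc => (far_right i j hij hc hd).2)
      (fun e he => far_right j k hjk hd he) (attached i 0) (attached i 1) (attached k 0)
      (attached k 1)
  choose c hcM hcA hcB using common
  exact not_three_common_attachments h1 h2 (hconn _).preconnected (hconn _).preconnected far_left
    (fun i j hij => far_right i j hij (hcM i) (hcM j)) hcA hcB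

/-- Every `{P_4 + P_1, C_4}`-free graph is `K_{2,3}`-induced-minor-free. -/
theorem stmt_17 {V : Type} [Finite V] (G : SimpleGraph V)
    (h1 : IndFree P4plusP1 G) (h2 : IndFree (cycleGraph 4) G) :
    ¬ InducedMinor (completeBipartiteGraph (Fin 2) (Fin 3)) G :=
  stmt_17_general G h1 h2
end

section
/- If G is a graph that is both (P_4 + P_1)-free and C_4-free, then tree-θ(G) ≤ 3, where tree-θ denotes the tree-clique-cover number; consequently tree-α(G) ≤ 3 as well. -/
open SimpleGraph

/-- The independence number of the subgraph of `G` induced by `s`: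
the supremum of sizes of independent sets contained in `s`. -/
noncomputable def setIndepNum {V : Type*} (G : SimpleGraph V) (s : Set V) : ℕ :=
  sSup {n | ∃ t : Finset V, ↑t ⊆ s ∧ (∀ u ∈ t, ∀ v ∈ t, u ≠ v → ¬ G.Adj u v) ∧ t.card = n}

/-- A tree decomposition of a graph `G`. -/
structure TreeDecomp {V : Type*} (G : SimpleGraph V) where
  ι : Type
  T : SimpleGraph ι
  tree : T.IsTree
  bag : ι → Set V
  bag_vert : ∀ v : V, ∃ i, v ∈ bag i
  bag_edge : ∀ u v : V, G.Adj u v → ∃ i, u ∈ bag i ∧ v ∈ bag i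
  bag_conn : ∀ v : V, (T.induce {i | v ∈ bag i}).Connected

/-- The tree-independence number of `G`: the least `n` such that `G` has a tree
decomposition all of whose bags induce subgraphs with independence number at most `n`. -/
noncomputable def treeIndepNum {V : Type*} (G : SimpleGraph V) : ℕ :=
  sInf {n | ∃ D : TreeDecomp G, ∀ i, setIndepNum G (D.bag i) ≤ n}

/-- The clique cover number of the subgraph of `G` induced by `s`: the least `n` such that
`s` can be partitioned into `n` cliques of `G` (equivalently, there is an assignment of one
of `n` labels to each vertex of `s` such that vertices with equal labels form cliques). -/
noncomputable def setCliqueCoverNum {V : Type*} (G : SimpleGraph V) (s : Set V) : ℕ :=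
  sInf {n | ∃ f : s → Fin n, ∀ x y : s, f x = f y → (x : V) = y ∨ G.Adj x y}

/-- The tree-clique-cover number of `G`: the least `n` such that `G` has a tree
decomposition all of whose bags induce subgraphs with clique cover number at most `n`. -/
noncomputable def treeCliqueCoverNum {V : Type*} (G : SimpleGraph V) : ℕ :=
  sInf {n | ∃ D : TreeDecomp G, ∀ i, setCliqueCoverNum G (D.bag i) ≤ n}

/-!
If the vertices of `G` are covered by two proper subsets `A` and `B` which meet in a clique, and no
edge joins `A \ B` to `B \ A`, then tree decompositions of the two parts can be glued along a bag
of each containing `A ∩ B`, so by induction it suffices to treat graphs without such a separation.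

Let `x` and `y` be distinct and nonadjacent in such a graph. The component of `x` in the graph of
non-neighbours of `y` is `P_4`-free, hence has diameter at most two, and its attachments in the
neighbourhood of `y` do not form a clique. Two nonadjacent attachments and a shortest path between
them through the component close up with `y` to an induced `C_5` or `C_6`.

Fix an induced `C_5`, or an induced `C_6` if there is no induced `C_5`. Every vertex is either
adjacent to the whole cycle, or a twin of one of its vertices, or, on a `C_5`, sees exactly the
two vertices not adjacent to a given one (an antitwin). The classes of twins are cliques, twins of
nonadjacent vertices are nonadjacent, at most two classes of antitwins are nonempty, and a class of
antitwins which is not a clique has a clique as its neighbourhood, which gives a separation. If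
there is none, a path of three or four bags, each a union of three cliques, decomposes the graph.
-/

section Trees

variable {α β γ : Type*} {A : SimpleGraph α} {B : SimpleGraph β}

theorem exists_walk_map_sumInl {x y : α ⊕ β} (p : (A ⊕g B).Walk x y) :
    ∀ a, (ha : x = Sum.inl a) → ∃ b, ∃ hb : y = Sum.inl b, ∃ q : A.Walk a b,
      p = (q.map (Embedding.sumInl (H := B)).toHom).copy ha.symm hb.symm := by
  induction p with
  | nil => rintro a rfl; exact ⟨a, rfl, .nil, rfl⟩
  | @cons x z y h p ih =>
    rintro a rfl
    cases z with
    | inr z => simp at h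
    | inl z =>
      obtain ⟨b, rfl, q, rfl⟩ := ih z rfl
      exact ⟨b, rfl, .cons (by simpa using h) q, rfl⟩

theorem not_isCycle_sumInl (hA : A.IsAcyclic) {a : α}
    (c : (A ⊕g B).Walk (Sum.inl a) (Sum.inl a)) : ¬ c.IsCycle := by
  intro hc
  obtain ⟨b, hb, q, rfl⟩ := exists_walk_map_sumInl c a rfl
  obtain rfl : a = b := Sum.inl_injective hb
  exact hA q ((Walk.isCycle_map_iff_of_injective Sum.inl_injective).1 hc)

theorem isAcyclic_sum (hA : A.IsAcyclic) (hB : B.IsAcyclic) : (A ⊕g B).IsAcyclic := by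
  rintro (a | b) c hc
  · exact not_isCycle_sumInl hA c hc
  · exact not_isCycle_sumInl hB (c.map (Iso.sumComm (G := A) (H := B)).toHom)
      (hc.map Iso.sumComm.injective)

theorem isTree_sum_sup_edge (hA : A.IsTree) (hB : B.IsTree) (a : α) (b : β) :
    ((A ⊕g B) ⊔ edge (Sum.inl a) (Sum.inr b)).IsTree :=
  ⟨hA.connected.sum_sup_edge hB.connected,
    (isAcyclic_sum hA.isAcyclic hB.isAcyclic).sup_edge_of_not_reachable
      (not_reachable_sum_inl_inr a b)⟩

theorem connected_induce_image {s : Set α} (f : A →g B) (hs : (A.induce s).Connected) :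
    (B.induce (f '' s)).Connected :=
  hs.map (induceHom f (Set.mapsTo_image f s)) (Set.surjective_mapsTo_image_restrict f s)

theorem connected_induce_sum_sup_edge {s : Set α} {t : Set β} {i : α} {j : β}
    (hs : s.Nonempty → (A.induce s).Connected) (ht : t.Nonempty → (B.induce t).Connected)
    (hst : s.Nonempty ∨ t.Nonempty) (hij : s.Nonempty → t.Nonempty → i ∈ s ∧ j ∈ t) :
    (((A ⊕g B) ⊔ edge (Sum.inl i) (Sum.inr j)).induce (Sum.inl '' s ∪ Sum.inr '' t)).Connected := by
  let T := (A ⊕g B) ⊔ edge (Sum.inl i) (Sum.inr j)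
  let f : A →g T := (Hom.ofLE le_sup_left).comp Embedding.sumInl.toHom
  let g : B →g T := (Hom.ofLE le_sup_left).comp Embedding.sumInr.toHom
  have conn_inl (h : s.Nonempty) := connected_induce_image f (hs h)
  have conn_inr (h : t.Nonempty) := connected_induce_image g (ht h)
  rcases s.eq_empty_or_nonempty with rfl | hs'
  · rw [Set.image_empty, Set.empty_union]
    exact conn_inr (hst.resolve_left Set.not_nonempty_empty)
  rcases t.eq_empty_or_nonempty with rfl | ht'
  · rw [Set.image_empty, Set.union_empty]
    exact conn_inl hs'
  obtain ⟨hi, hj⟩ := hij hs' ht'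
  exact connected_induce_union (conn_inl hs').preconnected (conn_inr ht').preconnected
    ⟨i, hi, rfl⟩ ⟨j, hj, rfl⟩ (by simp [edge_adj])

theorem mem_of_mem_support_of_isPath (hA : A.IsAcyclic) {s : Set α}
    (hs : (A.induce s).Preconnected) {i j k : α} (hi : i ∈ s) (hk : k ∈ s) {p : A.Walk i k}
    (hp : p.IsPath) (hj : j ∈ p.support) : j ∈ s := by
  classical
  obtain ⟨q⟩ := hs ⟨i, hi⟩ ⟨k, hk⟩
  have hq : (q.bypass.map (Embedding.induce s).toHom).IsPath :=
    q.bypass_isPath.map Subtype.val_injective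
  obtain rfl : p = q.bypass.map (Embedding.induce s).toHom :=
    congr_arg Subtype.val ((hA.subsingleton_path i k).elim ⟨p, hp⟩ ⟨_, hq⟩)
  obtain ⟨j, -, rfl⟩ := List.mem_map.1 (Walk.support_map _ _ ▸ hj)
  exact j.2

theorem induce_hasse [PartialOrder γ] (s : Set γ) [hs : s.OrdConnected] :
    (hasse γ).induce s = hasse s := by
  have covBy_iff (a b : s) : (a : γ) ⋖ b ↔ a ⋖ b :=
    Set.OrdConnected.apply_covBy_apply_iff (OrderEmbedding.subtype (· ∈ s))
      (by rwa [OrderEmbedding.coe_subtype, Subtype.range_coe])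
  ext a b
  simp only [comap_adj, Function.Embedding.subtype_apply, hasse_adj, covBy_iff]

theorem connected_induce_hasse [LinearOrder γ] [SuccOrder γ] [IsSuccArchimedean γ] {s : Set γ}
    (hs : s.OrdConnected) (hne : s.Nonempty) : ((hasse γ).induce s).Connected := by
  have := hne.to_subtype
  rw [induce_hasse]
  exact ⟨hasse_preconnected_of_succ s⟩

theorem isBridge_hasse_of_covBy [LinearOrder γ] {a b : γ} (hab : a ⋖ b) :
    (hasse γ).IsBridge s(a, b) := by
  have le_of_walk {c d : γ} (p : ((hasse γ).deleteEdges {s(a, b)}).Walk c d) (hc : c ≤ a) :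
      d ≤ a := by
    induction p with
    | nil => exact hc
    | @cons c d _ h _ ih =>
      obtain ⟨hcd | hdc, hne⟩ := deleteEdges_adj.1 h
      · have hca : c ≠ a := by
          rintro rfl
          exact hne (by rw [CovBy.unique_right hcd hab, Set.mem_singleton_iff])
        exact ih (CovBy.ge_of_gt hcd (hc.lt_of_ne hca))
      · exact ih (hdc.le.trans hc)
  exact isBridge_iff.2 fun ⟨p⟩ ↦ (le_of_walk p le_rfl).not_gt hab.lt

theorem isAcyclic_hasse [LinearOrder γ] : (hasse γ).IsAcyclic :=
  isAcyclic_iff_forall_adj_isBridge.2 fun _ _ h ↦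
    h.elim isBridge_hasse_of_covBy fun h ↦ Sym2.eq_swap ▸ isBridge_hasse_of_covBy h

theorem isTree_pathGraph (n : ℕ) : (pathGraph (n + 1)).IsTree :=
  ⟨pathGraph_connected n, isAcyclic_hasse⟩

end Trees

section CliqueCover

variable {V W : Type*} {G : SimpleGraph V} {H : SimpleGraph W}

theorem setCliqueCoverNum_le_of_subset_iUnion {k : ℕ} {s : Set V} (C : Fin k → Set V)
    (hC : ∀ j, G.IsClique (C j)) (hs : s ⊆ ⋃ j, C j) : setCliqueCoverNum G s ≤ k := by
  choose f hf using fun x : s ↦ Set.mem_iUnion.1 (hs x.2)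
  refine Nat.sInf_le ⟨f, fun x y hxy ↦ or_iff_not_imp_left.2 fun hne ↦ ?_⟩
  exact hC (f x) (hf x) (hxy ▸ hf y) hne

theorem exists_cliqueCover_of_finite {s : Set V} (hs : s.Finite) :
    ∃ f : s → Fin (setCliqueCoverNum G s), ∀ x y : s, f x = f y → (x : V) = y ∨ G.Adj x y := by
  have := hs.to_subtype
  exact Nat.sInf_mem (s := {n | ∃ f : s → Fin n, ∀ x y : s, f x = f y → (x : V) = y ∨ G.Adj x y})
    ⟨Nat.card s, Finite.equivFin s, fun x y h ↦
      .inl (congr_arg _ ((Finite.equivFin s).injective h))⟩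

theorem setIndepNum_le_setCliqueCoverNum {s : Set V} (hs : s.Finite) :
    setIndepNum G s ≤ setCliqueCoverNum G s := by
  obtain ⟨f, hf⟩ := exists_cliqueCover_of_finite (G := G) hs
  refine csSup_le' ?_
  rintro _ ⟨t, hts, hind, rfl⟩
  have hinj : Function.Injective fun x : t ↦ f ⟨x, hts x.2⟩ := by
    intro x y hxy
    by_contra hne
    have hne' : (x : V) ≠ y := fun h ↦ hne (Subtype.ext h)
    exact hind x x.2 y y.2 hne' ((hf _ _ hxy).resolve_left hne')
  simpa using Fintype.card_le_of_injective _ hinj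

theorem setCliqueCoverNum_image (f : H ↪g G) (s : Set W) :
    setCliqueCoverNum G (f '' s) = setCliqueCoverNum H s := by
  let e : s ≃ f '' s := Equiv.Set.image f s f.injective
  refine congr_arg sInf (Set.ext fun n ↦ Iff.symm ?_)
  refine (e.arrowCongr (Equiv.refl (Fin n))).exists_congr fun g ↦ ?_
  refine e.forall_congr fun x ↦ e.forall_congr fun y ↦ ?_
  simp [e, f.injective.eq_iff]

end CliqueCover

namespace TreeDecomp

variable {V : Type*} {G : SimpleGraph V}

theorem mem_bag_of_adj_of_isPath (D : TreeDecomp G) {v w : V} {i j k m : D.ι} {hij : D.T.Adj i j}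
    {p : D.T.Walk j k} (hp : (p.cons hij).IsPath) (hvi : v ∉ D.bag i) (hvk : v ∈ D.bag k)
    (hvm : v ∈ D.bag m) (hwi : w ∈ D.bag i) (hwm : w ∈ D.bag m) : w ∈ D.bag j := by
  classical
  obtain ⟨q⟩ := (D.bag_conn v).preconnected ⟨k, hvk⟩ ⟨m, hvm⟩
  let q' : D.T.Walk k m := q.map (Embedding.induce {i | v ∈ D.bag i}).toHom
  have hiq : i ∉ q'.support := by
    rintro h
    obtain ⟨i, -, rfl⟩ := List.mem_map.1 (Walk.support_map _ _ ▸ h)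
    exact hvi i.2
  have hi : i ∉ (p.append q').bypass.support := fun h ↦
    ((Walk.mem_support_append_iff _ _).1 (Walk.support_bypass_subset_support _ h)).elim
      ((Walk.cons_isPath_iff hij p).1 hp).2 hiq
  exact mem_of_mem_support_of_isPath D.tree.isAcyclic (D.bag_conn w).preconnected hwi hwm
    ((Walk.bypass_isPath _).cons hi : (Walk.cons hij _).IsPath) (by simp)

theorem exists_subset_bag_of_isClique (D : TreeDecomp G) {C : Set V} (hfin : C.Finite)
    (hC : G.IsClique C) : ∃ i, C ⊆ D.bag i := by
  induction C, hfin using Set.Finite.induction_on with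
  | empty => exact ⟨D.tree.connected.nonempty.some, Set.empty_subset _⟩
  | @insert v C hv _ ih =>
    obtain ⟨i, hi⟩ := ih (hC.subset (Set.subset_insert v C))
    obtain ⟨k, hk⟩ := D.bag_vert v
    have hvC (w : V) (hw : w ∈ C) : ∃ m, v ∈ D.bag m ∧ w ∈ D.bag m :=
      D.bag_edge v w (hC (C.mem_insert v) (.inr hw) (ne_of_mem_of_not_mem hw hv).symm)
    obtain ⟨p, hp⟩ := (D.tree.existsUnique_path i k).exists
    induction p with
    | nil => exact ⟨_, Set.insert_subset hk hi⟩
    | @cons i j k hij p ihp =>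
      by_cases hvi : v ∈ D.bag i
      · exact ⟨i, Set.insert_subset hvi hi⟩
      · refine ihp (fun w hw ↦ ?_) hk hp.of_cons
        obtain ⟨m, hvm, hwm⟩ := hvC w hw
        exact D.mem_bag_of_adj_of_isPath hp hvi hk hvm (hi hw) hwm

end TreeDecomp

namespace TreeDecomp

variable {V : Type*} {G : SimpleGraph V} {A B : Set V}

theorem connected_image_bag (D : TreeDecomp (G.induce A)) {v : V} (hv : v ∈ A) :
    (D.T.induce {k | v ∈ Subtype.val '' D.bag k}).Connected := by
  have hset : {k | v ∈ Subtype.val '' D.bag k} = {k | ⟨v, hv⟩ ∈ D.bag k} := by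
    ext k; simp [hv]
  rw [hset]
  exact D.bag_conn ⟨v, hv⟩

/-- Tree decompositions of two induced subgraphs are glued by joining their trees by an edge
between two nodes whose bags contain the common vertices. -/
def glue (D₁ : TreeDecomp (G.induce A)) (D₂ : TreeDecomp (G.induce B))
    (hvert : A ∪ B = Set.univ) (hedge : ∀ u v, G.Adj u v → u ∈ A ∧ v ∈ A ∨ u ∈ B ∧ v ∈ B)
    {i : D₁.ι} {j : D₂.ι} (hi : A ∩ B ⊆ Subtype.val '' D₁.bag i)
    (hj : A ∩ B ⊆ Subtype.val '' D₂.bag j) : TreeDecomp G where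
  ι := D₁.ι ⊕ D₂.ι
  T := (D₁.T ⊕g D₂.T) ⊔ edge (Sum.inl i) (Sum.inr j)
  tree := isTree_sum_sup_edge D₁.tree D₂.tree i j
  bag := Sum.elim (fun k ↦ Subtype.val '' D₁.bag k) (fun k ↦ Subtype.val '' D₂.bag k)
  bag_vert v := by
    rcases (hvert ▸ Set.mem_univ v : v ∈ A ∪ B) with hv | hv
    · obtain ⟨k, hk⟩ := D₁.bag_vert ⟨v, hv⟩
      exact ⟨Sum.inl k, ⟨v, hv⟩, hk, rfl⟩
    · obtain ⟨k, hk⟩ := D₂.bag_vert ⟨v, hv⟩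
      exact ⟨Sum.inr k, ⟨v, hv⟩, hk, rfl⟩
  bag_edge u v huv := by
    rcases hedge u v huv with ⟨hu, hv⟩ | ⟨hu, hv⟩
    · obtain ⟨k, huk, hvk⟩ := D₁.bag_edge ⟨u, hu⟩ ⟨v, hv⟩ huv
      exact ⟨Sum.inl k, ⟨_, huk, rfl⟩, ⟨_, hvk, rfl⟩⟩
    · obtain ⟨k, huk, hvk⟩ := D₂.bag_edge ⟨u, hu⟩ ⟨v, hv⟩ huv
      exact ⟨Sum.inr k, ⟨_, huk, rfl⟩, ⟨_, hvk, rfl⟩⟩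
  bag_conn v := by
    have mem_left (h : {k | v ∈ Subtype.val '' D₁.bag k}.Nonempty) : v ∈ A :=
      let ⟨_, u, _, huv⟩ := h; huv ▸ u.2
    have mem_right (h : {k | v ∈ Subtype.val '' D₂.bag k}.Nonempty) : v ∈ B :=
      let ⟨_, u, _, huv⟩ := h; huv ▸ u.2
    have hset : {k | v ∈ Sum.elim (fun k ↦ Subtype.val '' D₁.bag k)
        (fun k ↦ Subtype.val '' D₂.bag k) k} =
        Sum.inl '' {k | v ∈ Subtype.val '' D₁.bag k} ∪
          Sum.inr '' {k | v ∈ Subtype.val '' D₂.bag k} := by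
      ext (k | k) <;> simp
    rw [hset]
    refine connected_induce_sum_sup_edge (fun h ↦ D₁.connected_image_bag (mem_left h))
      (fun h ↦ D₂.connected_image_bag (mem_right h)) ?_
      fun h₁ h₂ ↦ ⟨hi ⟨mem_left h₁, mem_right h₂⟩, hj ⟨mem_left h₁, mem_right h₂⟩⟩
    exact (hvert ▸ Set.mem_univ v : v ∈ A ∪ B).imp
      (fun hv ↦ (D₁.connected_image_bag hv).nonempty.elim fun k ↦ ⟨k, k.2⟩)
      (fun hv ↦ (D₂.connected_image_bag hv).nonempty.elim fun k ↦ ⟨k, k.2⟩)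

/-- A path decomposition: a sequence of bags in which each vertex occupies an interval. -/
def ofPath {n : ℕ} (bag : Fin (n + 1) → Set V) (hvert : ∀ v, ∃ i, v ∈ bag i)
    (hedge : ∀ u v, G.Adj u v → ∃ i, u ∈ bag i ∧ v ∈ bag i)
    (hinter : ∀ i j k, i < j → j < k → bag i ∩ bag k ⊆ bag j) : TreeDecomp G where
  ι := Fin (n + 1)
  T := pathGraph (n + 1)
  tree := isTree_pathGraph n
  bag := bag
  bag_vert := hvert
  bag_edge := hedge
  bag_conn v := by
    refine connected_induce_hasse ⟨fun i hi k hk j ⟨hij, hjk⟩ ↦ ?_⟩ (hvert v)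
    rcases hij.eq_or_lt with rfl | hij
    · exact hi
    rcases hjk.eq_or_lt with rfl | hjk
    · exact hk
    exact hinter i j k hij hjk ⟨hi, hk⟩

end TreeDecomp

section TreeNumbers

variable {V : Type*} {G : SimpleGraph V}

theorem TreeDecomp.treeCliqueCoverNum_le (D : TreeDecomp G) {k : ℕ}
    (hD : ∀ i, setCliqueCoverNum G (D.bag i) ≤ k) : treeCliqueCoverNum G ≤ k :=
  Nat.sInf_le ⟨D, hD⟩

theorem exists_treeDecomp_setCliqueCoverNum_le (G : SimpleGraph V) :
    ∃ D : TreeDecomp G, ∀ i, setCliqueCoverNum G (D.bag i) ≤ treeCliqueCoverNum G :=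
  Nat.sInf_mem (s := {n | ∃ D : TreeDecomp G, ∀ i, setCliqueCoverNum G (D.bag i) ≤ n})
    ⟨setCliqueCoverNum G Set.univ,
      .ofPath (n := 0) (fun _ ↦ Set.univ) (fun v ↦ ⟨0, Set.mem_univ v⟩)
        (fun u v _ ↦ ⟨0, Set.mem_univ u, Set.mem_univ v⟩) (fun _ _ _ _ _ ↦ Set.subset_univ _),
      fun _ ↦ le_rfl⟩

theorem treeIndepNum_le_treeCliqueCoverNum [Finite V] (G : SimpleGraph V) :
    treeIndepNum G ≤ treeCliqueCoverNum G := by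
  obtain ⟨D, hD⟩ := exists_treeDecomp_setCliqueCoverNum_le G
  exact Nat.sInf_le
    ⟨D, fun i ↦ (setIndepNum_le_setCliqueCoverNum (Set.toFinite (D.bag i))).trans (hD i)⟩

theorem treeCliqueCoverNum_le_of_path {n k : ℕ} (C : Fin (n + 1) → Fin k → Set V)
    (hC : ∀ i j, G.IsClique (C i j)) (hvert : ∀ v, ∃ i, v ∈ ⋃ j, C i j)
    (hedge : ∀ u v, G.Adj u v → ∃ i, u ∈ ⋃ j, C i j ∧ v ∈ ⋃ j, C i j)
    (hinter : ∀ i₁ i₂ i₃, i₁ < i₂ → i₂ < i₃ → (⋃ j, C i₁ j) ∩ ⋃ j, C i₃ j ⊆ ⋃ j, C i₂ j) :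
    treeCliqueCoverNum G ≤ k :=
  (TreeDecomp.ofPath _ hvert hedge hinter).treeCliqueCoverNum_le fun i ↦
    setCliqueCoverNum_le_of_subset_iUnion (C i) (hC i) subset_rfl

variable (G) in
/-- `A` and `B` separate `G` along the clique `A ∩ B`: no edge joins `A \ B` and `B \ A`, and
both of these sets are nonempty. -/
structure IsCliqueSeparation (A B : Set V) : Prop where
  union_eq : A ∪ B = Set.univ
  adj : ∀ u v, G.Adj u v → u ∈ A ∧ v ∈ A ∨ u ∈ B ∧ v ∈ B
  isClique : G.IsClique (A ∩ B)
  left_ne_univ : A ≠ Set.univ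
  right_ne_univ : B ≠ Set.univ

theorem exists_isCliqueSeparation {K N : Set V} (hK : K.Nonempty) (hN : G.IsClique N)
    (hKN : ∀ u ∈ K, ∀ v ∉ K, G.Adj u v → v ∈ N) {z : V} (hzK : z ∉ K) (hzN : z ∉ N) :
    ∃ A B, IsCliqueSeparation G A B := by
  refine ⟨K ∪ N, Kᶜ, ?_, fun u v huv ↦ ?_, hN.subset ?_, ?_, ?_⟩
  · grind
  · by_cases hu : u ∈ K <;> by_cases hv : v ∈ K <;> grind [huv.symm]
  · grind
  · exact (Set.ne_univ_iff_exists_notMem _).2 ⟨z, by grind⟩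
  · exact fun h ↦ hK.ne_empty (Set.compl_univ_iff.1 h)

theorem IsCliqueSeparation.treeCliqueCoverNum_le [Finite V] {A B : Set V}
    (h : IsCliqueSeparation G A B) :
    treeCliqueCoverNum G ≤
      max (treeCliqueCoverNum (G.induce A)) (treeCliqueCoverNum (G.induce B)) := by
  have exists_bag {S : Set V} (D : TreeDecomp (G.induce S)) (hS : A ∩ B ⊆ S) :
      ∃ i, A ∩ B ⊆ Subtype.val '' D.bag i := by
    obtain ⟨i, hi⟩ := D.exists_subset_bag_of_isClique (Set.toFinite (Subtype.val ⁻¹' (A ∩ B)))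
      fun u hu v hv hne ↦ h.isClique hu hv (Subtype.val_injective.ne hne)
    exact ⟨i, fun v hv ↦ ⟨⟨v, hS hv⟩, hi hv, rfl⟩⟩
  have coverNum_image {S : Set V} (s : Set S) :
      setCliqueCoverNum G (Subtype.val '' s) = setCliqueCoverNum (G.induce S) s :=
    setCliqueCoverNum_image (Embedding.induce S) s
  obtain ⟨D₁, hD₁⟩ := exists_treeDecomp_setCliqueCoverNum_le (G.induce A)
  obtain ⟨D₂, hD₂⟩ := exists_treeDecomp_setCliqueCoverNum_le (G.induce B)
  obtain ⟨i, hi⟩ := exists_bag D₁ Set.inter_subset_left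
  obtain ⟨j, hj⟩ := exists_bag D₂ Set.inter_subset_right
  refine (D₁.glue D₂ h.union_eq h.adj hi hj).treeCliqueCoverNum_le ?_
  rintro (k | k)
  · exact (coverNum_image _).trans_le ((hD₁ k).trans (le_max_left _ _))
  · exact (coverNum_image _).trans_le ((hD₂ k).trans (le_max_right _ _))

end TreeNumbers

section ForbiddenSubgraphs

variable {V W : Type*} {G : SimpleGraph V}

theorem nonempty_embedding_of_adj_iff {H : SimpleGraph W}
    (hH : ∀ i j, (∀ k, H.Adj i k ↔ H.Adj j k) → i = j) (f : W → V)
    (hf : ∀ i j, G.Adj (f i) (f j) ↔ H.Adj i j) : Nonempty (H ↪g G) :=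
  ⟨⟨f, fun i j hij ↦ hH i j fun k ↦ by rw [← hf, ← hf, hij]⟩, hf _ _⟩

theorem nonempty_cycleGraph_five_embedding {a b c d e : V} (hab : G.Adj a b) (hbc : G.Adj b c)
    (hcd : G.Adj c d) (hde : G.Adj d e) (hea : G.Adj e a) (hac : ¬ G.Adj a c)
    (hbd : ¬ G.Adj b d) (hce : ¬ G.Adj c e) (hda : ¬ G.Adj d a) (heb : ¬ G.Adj e b) :
    Nonempty (cycleGraph 5 ↪g G) := by
  refine nonempty_embedding_of_adj_iff (by decide) ![a, b, c, d, e] fun i j ↦ ?_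
  fin_cases i <;> fin_cases j <;> simp [cycleGraph_adj] <;> grind [Adj.symm, SimpleGraph.irrefl]

theorem nonempty_cycleGraph_six_embedding {a b c d e f : V} (hab : G.Adj a b) (hbc : G.Adj b c)
    (hcd : G.Adj c d) (hde : G.Adj d e) (hef : G.Adj e f) (hfa : G.Adj f a) (hac : ¬ G.Adj a c)
    (hbd : ¬ G.Adj b d) (hce : ¬ G.Adj c e) (hdf : ¬ G.Adj d f) (hea : ¬ G.Adj e a)
    (hfb : ¬ G.Adj f b) (had : ¬ G.Adj a d) (hbe : ¬ G.Adj b e) (hcf : ¬ G.Adj c f) :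
    Nonempty (cycleGraph 6 ↪g G) := by
  refine nonempty_embedding_of_adj_iff (by decide) ![a, b, c, d, e, f] fun i j ↦ ?_
  fin_cases i <;> fin_cases j <;> simp [cycleGraph_adj] <;> grind [Adj.symm, SimpleGraph.irrefl]

theorem IndFree.of_embedding {V' : Type*} {G' : SimpleGraph V'} {H : SimpleGraph W}
    (h : IndFree H G) (f : G' ↪g G) : IndFree H G' :=
  ⟨fun e ↦ h.false (f.comp e)⟩

theorem IndFree.chord_of_cycle (h : IndFree (cycleGraph 4) G) {a b c d : V} (hab : G.Adj a b)
    (hbc : G.Adj b c) (hcd : G.Adj c d) (hda : G.Adj d a) :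
    a = c ∨ b = d ∨ G.Adj a c ∨ G.Adj b d := by
  by_contra! hno
  have hinj : Function.Injective ![a, b, c, d] := by
    simp [Function.Injective, Fin.forall_fin_succ]
    grind [Adj.symm, SimpleGraph.irrefl]
  refine h.false ⟨⟨![a, b, c, d], hinj⟩, fun {i j} ↦ ?_⟩
  fin_cases i <;> fin_cases j <;> simp [cycleGraph_adj] <;> grind [Adj.symm, SimpleGraph.irrefl]

theorem IndFree.isClique_commonNeighbors_s18 (h : IndFree (cycleGraph 4) G) {a b : V} (hne : a ≠ b)
    (hab : ¬ G.Adj a b) : G.IsClique (G.commonNeighbors a b) := by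
  intro u hu v hv huv
  rw [mem_commonNeighbors] at hu hv
  have := h.chord_of_cycle hu.1 hu.2.symm hv.2 hv.1.symm
  tauto

theorem IndFree.chord_of_path (h : IndFree (pathGraph 4) G) {a b c d : V} (hab : G.Adj a b)
    (hbc : G.Adj b c) (hcd : G.Adj c d) : G.Adj a c ∨ G.Adj a d ∨ G.Adj b d := by
  by_contra! hno
  refine h.false (nonempty_embedding_of_adj_iff ?_ ![a, b, c, d] fun i j ↦ ?_).some
  · simp only [pathGraph_adj]
    decide
  · fin_cases i <;> fin_cases j <;> simp [pathGraph_adj] <;> grind [Adj.symm, SimpleGraph.irrefl]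

theorem IndFree.pathGraph_induce_of_P4plusP1 (h : IndFree P4plusP1 G) (y : V) :
    IndFree (pathGraph 4) (G.induce (Gᶜ.neighborSet y)) := by
  have hy (w : Gᶜ.neighborSet y) : y ≠ w ∧ ¬ G.Adj y w := w.2
  refine ⟨fun e ↦ h.false ⟨⟨Sum.elim (fun i ↦ e i) (fun _ ↦ y), ?_⟩, fun {i j} ↦ ?_⟩⟩
  · exact (Subtype.val_injective.comp e.injective).sumElim (Function.injective_of_subsingleton _)
      fun i _ ↦ (hy (e i)).1.symm
  · rcases i with i | i <;> rcases j with j | j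
    · simpa [P4plusP1] using e.map_adj_iff
    · simpa [P4plusP1, adj_comm] using (hy (e i)).2
    · simpa [P4plusP1] using (hy (e j)).2
    · simp [P4plusP1]

theorem IndFree.adj_of_path (h : IndFree P4plusP1 G) {a b c d : V} (hab : G.Adj a b)
    (hbc : G.Adj b c) (hcd : G.Adj c d) (hac : ¬ G.Adj a c) (had : ¬ G.Adj a d)
    (hbd : ¬ G.Adj b d) (e : V) : G.Adj e a ∨ G.Adj e b ∨ G.Adj e c ∨ G.Adj e d := by
  by_contra! hno
  have hmem : ∀ w ∈ [a, b, c, d], w ∈ Gᶜ.neighborSet e := by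
    simp only [mem_neighborSet, compl_adj]
    grind [Adj.symm]
  have := (h.pathGraph_induce_of_P4plusP1 e).chord_of_path (a := ⟨a, hmem a (by simp)⟩)
    (b := ⟨b, hmem b (by simp)⟩) (c := ⟨c, hmem c (by simp)⟩) (d := ⟨d, hmem d (by simp)⟩)
    hab hbc hcd
  tauto

theorem IndFree.adj_or_mem_commonNeighbors_of_reachable (h : IndFree (pathGraph 4) G) {p q : V}
    (hpq : G.Reachable p q) (hne : p ≠ q) : G.Adj p q ∨ (G.commonNeighbors p q).Nonempty := by
  rw [reachable_iff_reflTransGen] at hpq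
  induction hpq with
  | refl => exact absurd rfl hne
  | @tail q r _ hqr ih =>
    by_cases hpq : p = q
    · exact .inl (hpq ▸ hqr)
    rcases ih hpq with hpq | ⟨w, hpw, hqw⟩
    · exact .inr ⟨q, hpq, hqr.symm⟩
    · rcases h.chord_of_path hpw hqw.symm hqr with hpq | hpr | hwr
      · exact .inr ⟨q, hpq, hqr.symm⟩
      · exact .inl hpr
      · exact .inr ⟨w, hpw, hwr.symm⟩

end ForbiddenSubgraphs

section Atoms

variable {V : Type*} {G : SimpleGraph V}

theorem nonempty_cycleGraph_embedding_of_reachable (h4 : IndFree (cycleGraph 4) G)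
    (hP : IndFree P4plusP1 G) {y m n : V} (hm : G.Adj y m) (hn : G.Adj y n) (hne : m ≠ n)
    (hmn : ¬ G.Adj m n) {p q : Gᶜ.neighborSet y} (hmp : G.Adj m p) (hnq : G.Adj n q)
    (hpq : (G.induce (Gᶜ.neighborSet y)).Reachable p q) :
    Nonempty (cycleGraph 5 ↪g G) ∨ Nonempty (cycleGraph 6 ↪g G) := by
  have not_adj_y (a : Gᶜ.neighborSet y) : ¬ G.Adj y a := a.2.2
  have not_adj_both (a : Gᶜ.neighborSet y) (hma : G.Adj m a) : ¬ G.Adj n a := fun hna ↦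
    hmn (h4.isClique_commonNeighbors_s18 a.2.1 a.2.2 ⟨hm, hma.symm⟩ ⟨hn, hna.symm⟩ hne)
  have pentagon (a b : Gᶜ.neighborSet y) (hma : G.Adj m a) (hab : G.Adj a b) (hnb : G.Adj n b) :
      Nonempty (cycleGraph 5 ↪g G) :=
    nonempty_cycleGraph_five_embedding hm hma hab hnb.symm hn.symm (not_adj_y a)
      (fun h ↦ not_adj_both b h hnb) (fun h ↦ not_adj_both a hma h.symm)
      (fun h ↦ not_adj_y b h.symm) (fun h ↦ hmn h.symm)
  have hpq_ne : p ≠ q := by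
    rintro rfl
    exact not_adj_both p hmp hnq
  rcases (hP.pathGraph_induce_of_P4plusP1 y).adj_or_mem_commonNeighbors_of_reachable hpq hpq_ne with
    hpq | ⟨w, hpw : G.Adj p w, hqw : G.Adj q w⟩
  · exact .inl (pentagon p q hmp hpq hnq)
  by_cases hpq : G.Adj p q
  · exact .inl (pentagon p q hmp hpq hnq)
  by_cases hmw : G.Adj m w
  · exact .inl (pentagon w q hmw hqw.symm hnq)
  by_cases hnw : G.Adj n w
  · exact .inl (pentagon p w hmp hpw hnw)
  exact .inr <| nonempty_cycleGraph_six_embedding hm hmp hpw hqw.symm hnq.symm hn.symm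
    (not_adj_y p) hmw hpq (fun h ↦ hnw h.symm) (fun h ↦ not_adj_y q h.symm) (fun h ↦ hmn h.symm)
    (not_adj_y w) (fun h ↦ not_adj_both q h hnq) (fun h ↦ not_adj_both p hmp h.symm)

theorem exists_isCliqueSeparation_or_cycleGraph_embedding (h4 : IndFree (cycleGraph 4) G)
    (hP : IndFree P4plusP1 G) {x y : V} (hxy : x ≠ y) (hadj : ¬ G.Adj x y) :
    (∃ A B, IsCliqueSeparation G A B) ∨
      Nonempty (cycleGraph 5 ↪g G) ∨ Nonempty (cycleGraph 6 ↪g G) := by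
  let x' : Gᶜ.neighborSet y := ⟨x, hxy.symm, fun h ↦ hadj h.symm⟩
  let K : Set V := {u | ∃ h : u ∈ Gᶜ.neighborSet y, (G.induce _).Reachable x' ⟨u, h⟩}
  let N : Set V := {m | G.Adj y m ∧ ∃ u ∈ K, G.Adj m u}
  by_cases hN : G.IsClique N
  · refine .inl (exists_isCliqueSeparation (K := K) ⟨x, x'.2, .rfl⟩ hN ?_ (z := y)
      (fun h ↦ h.1.1 rfl) (fun h ↦ h.1.ne rfl))
    rintro u ⟨hu, hxu⟩ v hvK huv
    have hyv : y ≠ v := by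
      rintro rfl
      exact hu.2 huv.symm
    have hyv' : G.Adj y v := by
      by_contra hyv'
      exact hvK ⟨⟨hyv, hyv'⟩, hxu.trans (Adj.reachable huv)⟩
    exact ⟨hyv', u, ⟨hu, hxu⟩, huv.symm⟩
  · obtain ⟨m, ⟨hm, p, ⟨_, hxp⟩, hmp⟩, n, ⟨hn, q, ⟨_, hxq⟩, hnq⟩, hne, hmn⟩ :
        ∃ m ∈ N, ∃ n ∈ N, m ≠ n ∧ ¬ G.Adj m n := by
      simpa only [IsClique, Set.Pairwise, not_forall, exists_prop] using hN
    exact .inr (nonempty_cycleGraph_embedding_of_reachable h4 hP hm hn hne hmn hmp hnq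
      (hxp.symm.trans hxq))

end Atoms

section CliqueArrangements

variable {V : Type*} {G : SimpleGraph V}

theorem treeCliqueCoverNum_le_three_of_five_cliques {A₁ A₂ Q₁ Q₂ Q₃ Q₄ Q₅ X₁ X₂ U : Set V}
    (hunion : A₁ ∪ A₂ ∪ Q₁ ∪ Q₂ ∪ Q₃ ∪ Q₄ ∪ Q₅ ∪ U = Set.univ) (hX₁ : X₁ ⊆ Q₁) (hX₂ : X₂ ⊆ Q₂)
    (hA₁ : G.IsClique (A₁ ∪ Q₃ ∪ X₂)) (hA₂ : G.IsClique (A₂ ∪ Q₅ ∪ X₁))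
    (hQ₁ : G.IsClique (Q₁ ∪ U)) (hQ₂ : G.IsClique Q₂) (hQ₄ : G.IsClique (Q₄ ∪ U))
    (hAQ₁ : ∀ v ∈ Q₁, ∀ a ∈ A₁ ∪ A₂ ∪ Q₄, G.Adj v a → v ∈ X₁)
    (hAQ₂ : ∀ v ∈ Q₂, ∀ a ∈ A₁ ∪ A₂ ∪ Q₄ ∪ Q₅, G.Adj v a → v ∈ X₂)
    (hdisj : Disjoint Q₂ (A₁ ∪ A₂ ∪ Q₄)) :
    treeCliqueCoverNum G ≤ 3 := by
  simp only [Set.eq_univ_iff_forall, Set.mem_union] at hunion hAQ₁ hAQ₂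
  simp only [Set.disjoint_left] at hdisj
  refine treeCliqueCoverNum_le_of_path
    ![![A₁ ∪ Q₃ ∪ X₂, A₂ ∪ Q₅ ∪ X₁, Q₄ ∪ U], ![Q₃ ∪ X₂, Q₅, Q₁ ∪ U], ![Q₃, Q₂, Q₁ ∪ U]]
    ?_ (fun v ↦ ?_) (fun u v huv ↦ ?_) ?_
  · have hQX : G.IsClique (Q₃ ∪ X₂) := hA₁.subset (by grind)
    have hQ₃ : G.IsClique Q₃ := hA₁.subset (by grind)
    have hQ₅ : G.IsClique Q₅ := hA₂.subset (by grind)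
    simp [Fin.forall_fin_succ, hA₁, hA₂, hQ₁, hQ₂, hQ₄, hQX, hQ₃, hQ₅]
  · have := hunion v
    simp only [Fin.exists_fin_succ, Matrix.cons_val_zero, Matrix.cons_val_succ,
      IsEmpty.exists_iff, Set.mem_iUnion, Set.mem_union]
    tauto
  · have := hunion u
    have := hunion v
    simp only [Fin.exists_fin_succ, Matrix.cons_val_zero, Matrix.cons_val_succ,
      IsEmpty.exists_iff, Set.mem_iUnion, Set.mem_union]
    grind [Adj.symm]
  · suffices (A₁ ∪ Q₃ ∪ X₂ ∪ (A₂ ∪ Q₅ ∪ X₁) ∪ (Q₄ ∪ U)) ∩ (Q₃ ∪ Q₂ ∪ (Q₁ ∪ U)) ⊆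
        Q₃ ∪ X₂ ∪ Q₅ ∪ (Q₁ ∪ U) by
      simpa [Fin.forall_fin_succ, Set.subset_def, Fin.exists_fin_succ, or_assoc] using this
    simp only [Set.subset_def, Set.mem_inter_iff, Set.mem_union]
    grind

theorem treeCliqueCoverNum_le_three_of_six_cliques {Q₁ Q₂ Q₃ Q₄ Q₅ Q₆ U : Set V}
    (hunion : Q₁ ∪ Q₂ ∪ Q₃ ∪ Q₄ ∪ Q₅ ∪ Q₆ ∪ U = Set.univ) (hQ₁ : G.IsClique (Q₁ ∪ U))
    (hQ₂ : G.IsClique Q₂) (hQ₃ : G.IsClique Q₃) (hQ₄ : G.IsClique Q₄) (hQ₅ : G.IsClique Q₅)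
    (hQ₆ : G.IsClique Q₆) (h₂₄ : ∀ u ∈ Q₂, ∀ v ∈ Q₄, ¬ G.Adj u v)
    (h₂₅ : ∀ u ∈ Q₂, ∀ v ∈ Q₅, ¬ G.Adj u v) (h₂₆ : ∀ u ∈ Q₂, ∀ v ∈ Q₆, ¬ G.Adj u v)
    (h₃₅ : ∀ u ∈ Q₃, ∀ v ∈ Q₅, ¬ G.Adj u v) (h₃₆ : ∀ u ∈ Q₃, ∀ v ∈ Q₆, ¬ G.Adj u v)
    (h₄₆ : ∀ u ∈ Q₄, ∀ v ∈ Q₆, ¬ G.Adj u v) (d₂₅ : Disjoint Q₂ Q₅) (d₂₆ : Disjoint Q₂ Q₆)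
    (d₃₆ : Disjoint Q₃ Q₆) : treeCliqueCoverNum G ≤ 3 := by
  simp only [Set.eq_univ_iff_forall, Set.mem_union] at hunion
  simp only [Set.disjoint_left] at d₂₅ d₂₆ d₃₆
  refine treeCliqueCoverNum_le_of_path
    ![![Q₁ ∪ U, Q₂, Q₃], ![Q₁ ∪ U, Q₃, Q₄], ![Q₁ ∪ U, Q₄, Q₅], ![Q₁ ∪ U, Q₅, Q₆]]
    ?_ (fun v ↦ ?_) (fun u v huv ↦ ?_) ?_
  · simp [Fin.forall_fin_succ, hQ₁, hQ₂, hQ₃, hQ₄, hQ₅, hQ₆]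
  · have := hunion v
    simp only [Fin.exists_fin_succ, Matrix.cons_val_zero, Matrix.cons_val_succ,
      IsEmpty.exists_iff, Set.mem_iUnion, Set.mem_union]
    tauto
  · have := hunion u
    have := hunion v
    simp only [Fin.exists_fin_succ, Matrix.cons_val_zero, Matrix.cons_val_succ,
      IsEmpty.exists_iff, Set.mem_iUnion, Set.mem_union]
    grind [Adj.symm]
  · simp [Fin.forall_fin_succ, Set.subset_def, Fin.exists_fin_succ]
    grind

end CliqueArrangements

section Holes

variable {V W : Type*} {G : SimpleGraph V} {H : SimpleGraph W}

/-- The vertices adjacent to every vertex of the induced copy `c` of `H`. -/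
def hubs (c : H ↪g G) : Set V := {v | ∀ j, G.Adj v (c j)}

/-- The vertices which may replace `c i` in the induced copy `c` of `H`. Adjacency to `c i` is left
open, so that `c i` is a twin of itself. -/
def twins (c : H ↪g G) (i : W) : Set V := {v | ∀ j ≠ i, G.Adj v (c j) ↔ H.Adj i j}

/-- The vertices adjacent to exactly those vertices of the induced copy `c` of `H` which are
distinct from and not adjacent to `c i`. -/
def antitwins (c : H ↪g G) (i : W) : Set V := {v | ∀ j, G.Adj v (c j) ↔ Hᶜ.Adj i j}

theorem mem_twins {c : H ↪g G} {i : W} {v : V} :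
    v ∈ twins c i ↔ ∀ j ≠ i, G.Adj v (c j) ↔ H.Adj i j := Iff.rfl

theorem mem_antitwins {c : H ↪g G} {i : W} {v : V} :
    v ∈ antitwins c i ↔ ∀ j, G.Adj v (c j) ↔ i ≠ j ∧ ¬ H.Adj i j := Iff.rfl

theorem apply_mem_twins (c : H ↪g G) (i : W) : c i ∈ twins c i :=
  fun _ _ ↦ c.map_adj_iff

theorem isClique_twins_union_hubs (h4 : IndFree (cycleGraph 4) G) (c : H ↪g G) {i j k : W}
    (hij : H.Adj i j) (hik : H.Adj i k) (hne : j ≠ k) (hjk : ¬ H.Adj j k) :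
    G.IsClique (twins c i ∪ hubs c) := by
  refine (h4.isClique_commonNeighbors_s18 (c.injective.ne hne) (mt c.map_adj_iff.1 hjk)).subset ?_
  rintro v (hv | hv)
  · exact ⟨((hv j hij.ne').2 hij).symm, ((hv k hik.ne').2 hik).symm⟩
  · exact ⟨(hv j).symm, (hv k).symm⟩

theorem adj_or_eq_of_adj_of_adj (h4 : IndFree (cycleGraph 4) G) (c : H ↪g G) {i j k : W}
    (hij : H.Adj i j) (hjk : H.Adj j k) (hne : i ≠ k) (hik : ¬ H.Adj i k) {v : V}
    (hvi : G.Adj v (c i)) (hvk : G.Adj v (c k)) : v = c j ∨ G.Adj v (c j) :=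
  or_iff_not_imp_left.2 <|
    h4.isClique_commonNeighbors_s18 (c.injective.ne hne) (mt c.map_adj_iff.1 hik) ⟨hvi.symm, hvk.symm⟩
      ⟨c.map_adj_iff.2 hij, (c.map_adj_iff.2 hjk).symm⟩

end Holes

section Pentagon

variable {V : Type*} {G : SimpleGraph V}

local notation "C₅" => cycleGraph 5

set_option synthInstance.maxSize 1000 in
theorem forall_mem_or_exists_twin_or_antitwin_five (S : Finset (Fin 5))
    (hconv : ∀ i j k, (C₅).Adj i j → (C₅).Adj j k → i ≠ k → i ∈ S → k ∈ S → j ∈ S)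
    (hdom : ∀ i, ∃ j ≠ i, j ∈ S) :
    (∀ j, j ∈ S) ∨ ∃ i, (∀ j ≠ i, j ∈ S ↔ (C₅).Adj i j) ∨ ∀ j, j ∈ S ↔ (C₅)ᶜ.Adj i j := by
  decide +revert

theorem exists_cycleGraph_five_of_adj {i j : Fin 5} (hij : (C₅).Adj i j) : ∃ k l m,
    (C₅).Adj j k ∧ (C₅).Adj k l ∧ (C₅).Adj l m ∧ (C₅).Adj m i ∧ ¬ (C₅).Adj i k ∧
      ¬ (C₅).Adj j l ∧ ¬ (C₅).Adj k m ∧ ¬ (C₅).Adj l i ∧ ¬ (C₅).Adj m j ∧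
      ∀ a, a = i ∨ a = j ∨ a = k ∨ a = l ∨ a = m := by
  decide +revert

theorem exists_cycleGraph_five_of_not_adj {i k : Fin 5} (hne : i ≠ k)
    (hik : ¬ (C₅).Adj i k) : ∃ j l m,
    (C₅).Adj i j ∧ (C₅).Adj j k ∧ (C₅).Adj k l ∧ (C₅).Adj l m ∧ (C₅).Adj m i ∧
      ¬ (C₅).Adj j l ∧ ¬ (C₅).Adj k m ∧ ¬ (C₅).Adj l i ∧ ¬ (C₅).Adj m j := by
  decide +revert

theorem cycleGraph_five_not_adj_of_adj_of_adj {i j k : Fin 5} (hij : (C₅).Adj i j)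
    (hjk : (C₅).Adj j k) : ¬ (C₅).Adj i k := by
  decide +revert

theorem mem_hubs_or_twins_or_antitwins_five (h4 : IndFree (cycleGraph 4) G)
    (hP : IndFree P4plusP1 G) (c : C₅ ↪g G) (v : V) :
    v ∈ hubs c ∨ ∃ i, v ∈ twins c i ∨ v ∈ antitwins c i := by
  classical
  by_cases hv : ∃ i, v = c i
  · obtain ⟨i, rfl⟩ := hv
    exact .inr ⟨i, .inl (apply_mem_twins c i)⟩
  push Not at hv
  have := forall_mem_or_exists_twin_or_antitwin_five {j | G.Adj v (c j)}
  simp only [Finset.mem_filter_univ] at this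
  refine this (fun i j k hij hjk hne hi hk ↦ ?_) fun i ↦ ?_
  · have hik := cycleGraph_five_not_adj_of_adj_of_adj hij hjk
    exact (adj_or_eq_of_adj_of_adj h4 c hij hjk hne hik hi hk).resolve_left (hv j)
  · have hi : (C₅).Adj i (i + 1) := by simp [cycleGraph_adj]
    obtain ⟨k, l, m, h⟩ := exists_cycleGraph_five_of_adj hi
    have := hP.adj_of_path (a := c (i + 1)) (b := c k) (c := c l) (d := c m) (e := v)
    grind [Embedding.map_adj_iff, Adj.symm, SimpleGraph.irrefl]

variable {c : C₅ ↪g G}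

theorem disjoint_twins_five {i j : Fin 5} (hij : i ≠ j) : Disjoint (twins c i) (twins c j) := by
  obtain ⟨k, hki, hkj, hk⟩ : ∃ k, k ≠ i ∧ k ≠ j ∧ ¬ ((C₅).Adj i k ↔ (C₅).Adj j k) := by
    decide +revert
  exact Set.disjoint_left.2 fun v hvi hvj ↦ hk ((hvi k hki).symm.trans (hvj k hkj))

theorem disjoint_antitwins_twins (i j : Fin 5) : Disjoint (antitwins c i) (twins c j) := by
  obtain ⟨k, hkj, hk⟩ : ∃ k, k ≠ j ∧ ¬ ((C₅)ᶜ.Adj i k ↔ (C₅).Adj j k) := by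
    decide +revert
  exact Set.disjoint_left.2 fun v hvi hvj ↦ hk ((hvi k).symm.trans (hvj k hkj))

theorem isClique_twins_union_hubs_five (h4 : IndFree (cycleGraph 4) G) (i : Fin 5) :
    G.IsClique (twins c i ∪ hubs c) :=
  isClique_twins_union_hubs h4 c (j := i + 1) (k := i + 4) (by decide +revert)
    (by decide +revert) (by decide +revert) (by decide +revert)

theorem not_adj_of_mem_twins_five (h4 : IndFree (cycleGraph 4) G) {i k : Fin 5} (hne : i ≠ k)
    (hik : ¬ (C₅).Adj i k) {u v : V} (hu : u ∈ twins c i) (hv : v ∈ twins c k) :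
    ¬ G.Adj u v := by
  obtain ⟨j, l, m, h⟩ := exists_cycleGraph_five_of_not_adj hne hik
  intro huv
  have := h4.chord_of_cycle (a := u) (b := v) (c := c l) (d := c m)
  grind [mem_twins, Embedding.map_adj_iff, Adj.symm, SimpleGraph.irrefl]

theorem adj_of_mem_antitwins (hP : IndFree P4plusP1 G) {i j : Fin 5} (hij : (C₅).Adj i j)
    {a b : V} (ha : a ∈ antitwins c i) (hb : b ∈ antitwins c j) : G.Adj a b := by
  obtain ⟨k, l, m, h⟩ := exists_cycleGraph_five_of_adj hij
  have := hP.adj_of_path (a := a) (b := c k) (c := c j) (d := c i) (e := b)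
  grind [mem_antitwins, Embedding.map_adj_iff, Adj.symm, SimpleGraph.irrefl]

theorem adj_of_mem_antitwins_of_nonempty (h4 : IndFree (cycleGraph 4) G)
    (hP : IndFree P4plusP1 G) {i k : Fin 5} (hne : i ≠ k) (hi : (antitwins c i).Nonempty)
    (hk : (antitwins c k).Nonempty) : (C₅).Adj i k := by
  by_contra hik
  obtain ⟨a, ha⟩ := hi
  obtain ⟨b, hb⟩ := hk
  obtain ⟨j, l, m, h⟩ := exists_cycleGraph_five_of_not_adj hne hik
  have := hP.adj_of_path (a := a) (b := c l) (c := c m) (d := b) (e := c j)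
  have := h4.chord_of_cycle (a := a) (b := b) (c := c m) (d := c l)
  grind [mem_antitwins, Embedding.map_adj_iff, Adj.symm, SimpleGraph.irrefl]

theorem adj_of_mem_antitwins_of_mem_twins (hP : IndFree P4plusP1 G) {i k : Fin 5} (hne : i ≠ k)
    (hik : ¬ (C₅).Adj i k) {a q : V} (ha : a ∈ antitwins c i) (hq : q ∈ twins c k) :
    G.Adj a q := by
  obtain ⟨j, l, m, h⟩ := exists_cycleGraph_five_of_not_adj hne hik
  have := hP.adj_of_path (a := c m) (b := c i) (c := c j) (d := q) (e := a)
  grind [mem_twins, mem_antitwins, Embedding.map_adj_iff, Adj.symm, SimpleGraph.irrefl]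

theorem not_adj_of_mem_antitwins_of_mem_twins (h4 : IndFree (cycleGraph 4) G) {i : Fin 5}
    {a q : V} (ha : a ∈ antitwins c i) (hq : q ∈ twins c i) : ¬ G.Adj a q := by
  have hi : (C₅).Adj i (i + 1) := by simp [cycleGraph_adj]
  obtain ⟨k, l, m, h⟩ := exists_cycleGraph_five_of_adj hi
  intro haq
  have := h4.chord_of_cycle (a := a) (b := q) (c := c (i + 1)) (d := c k)
  grind [mem_twins, mem_antitwins, Embedding.map_adj_iff, Adj.symm, SimpleGraph.irrefl]

theorem antitwins_adj_of_adj (h4 : IndFree (cycleGraph 4) G) (hP : IndFree P4plusP1 G)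
    {i j : Fin 5} (hij : (C₅).Adj i j) {a b q : V} (ha : a ∈ antitwins c i)
    (hb : b ∈ antitwins c i) (hq : q ∈ twins c j) (haq : G.Adj a q) : G.Adj b q := by
  obtain ⟨k, l, m, h⟩ := exists_cycleGraph_five_of_adj hij
  have := hP.adj_of_path (a := a) (b := q) (c := c i) (d := c m) (e := b)
  have := hP.adj_of_path (a := b) (b := a) (c := q) (d := c j) (e := c m)
  have := isClique_twins_union_hubs_five h4 j (.inl hq) (.inl (apply_mem_twins c j))
  grind [mem_twins, mem_antitwins, Embedding.map_adj_iff, Adj.symm, SimpleGraph.irrefl]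

theorem twins_adj_of_adj_antitwin (h4 : IndFree (cycleGraph 4) G) (hP : IndFree P4plusP1 G)
    {i j k : Fin 5} (hij : (C₅).Adj i j) (hjk : (C₅).Adj j k) (hne : i ≠ k) {a q r : V}
    (ha : a ∈ antitwins c i) (hq : q ∈ twins c j) (haq : G.Adj a q) (hr : r ∈ twins c k) :
    G.Adj q r := by
  have haj : ¬ G.Adj (c j) a := fun h ↦ ((ha j).1 h.symm).2 hij
  have hqj : G.Adj (c j) q :=
    isClique_twins_union_hubs_five h4 j (.inl (apply_mem_twins c j)) (.inl hq)
      fun h ↦ haj (h ▸ haq.symm)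
  have hrj : G.Adj (c j) r := ((hr j hjk.ne).2 hjk.symm).symm
  have har : G.Adj a r :=
    adj_of_mem_antitwins_of_mem_twins hP hne (cycleGraph_five_not_adj_of_adj_of_adj hij hjk) ha hr
  exact h4.isClique_commonNeighbors_s18
    ((disjoint_antitwins_twins i j).ne_of_mem ha (apply_mem_twins c j)).symm haj ⟨hqj, haq⟩
    ⟨hrj, har⟩ ((disjoint_twins_five hjk.ne).ne_of_mem hq hr)

theorem isClique_antitwins_union (h4 : IndFree (cycleGraph 4) G) (hP : IndFree P4plusP1 G)
    {i j k : Fin 5} (hij : (C₅).Adj i j) (hjk : (C₅).Adj j k) (hne : i ≠ k)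
    (hA : G.IsClique (antitwins c i)) :
    G.IsClique (antitwins c i ∪ twins c k ∪ {q ∈ twins c j | ∃ a ∈ antitwins c i, G.Adj a q}) := by
  have hQ := isClique_twins_union_hubs_five (c := c) h4
  have complete_AQ {a q} (ha : a ∈ antitwins c i) (hq : q ∈ twins c k) : G.Adj a q :=
    adj_of_mem_antitwins_of_mem_twins hP hne (cycleGraph_five_not_adj_of_adj_of_adj hij hjk) ha hq
  have complete_AX {a b q} (hq : q ∈ twins c j) (hb : b ∈ antitwins c i) (hbq : G.Adj b q)
      (ha : a ∈ antitwins c i) : G.Adj a q := antitwins_adj_of_adj h4 hP hij hb ha hq hbq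
  have complete_XQ {b q r} (hq : q ∈ twins c j) (hb : b ∈ antitwins c i) (hbq : G.Adj b q)
      (hr : r ∈ twins c k) : G.Adj q r := twins_adj_of_adj_antitwin h4 hP hij hjk hne hb hq hbq hr
  rintro u ((hu | hu) | ⟨hu, a, ha, hau⟩) v ((hv | hv) | ⟨hv, b, hb, hbv⟩) huv
  · exact hA hu hv huv
  · exact complete_AQ hu hv
  · exact complete_AX hv hb hbv hu
  · exact (complete_AQ hv hu).symm
  · exact hQ k (.inl hu) (.inl hv) huv
  · exact (complete_XQ hv hb hbv hu).symm
  · exact (complete_AX hu ha hau hv).symm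
  · exact complete_XQ hu ha hau hv
  · exact hQ j (.inl hu) (.inl hv) huv

theorem isClique_antitwins_of_adj_twin (h4 : IndFree (cycleGraph 4) G) (hP : IndFree P4plusP1 G)
    {i j : Fin 5} (hij : (C₅).Adj i j) {a q : V} (ha : a ∈ antitwins c i) (hq : q ∈ twins c j)
    (haq : G.Adj a q) : G.IsClique (antitwins c i) := by
  obtain ⟨k, l, m, -, hkl, hlm, -, hik, hjl, -, hli, hmj, -⟩ := exists_cycleGraph_five_of_adj hij
  have hjl_ne : j ≠ l := fun h ↦ hmj (h ▸ hlm.symm)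
  have hil_ne : i ≠ l := fun h ↦ hik (h ▸ hkl.symm)
  have hql_ne : q ≠ c l := (disjoint_twins_five hjl_ne).ne_of_mem hq (apply_mem_twins c l)
  have hql : ¬ G.Adj q (c l) := not_adj_of_mem_twins_five h4 hjl_ne hjl hq (apply_mem_twins c l)
  have hsub : antitwins c i ⊆ G.commonNeighbors q (c l) := fun b hb ↦
    ⟨(antitwins_adj_of_adj h4 hP hij ha hb hq haq).symm,
      ((hb l).2 ⟨hil_ne, fun h ↦ hli h.symm⟩).symm⟩
  exact (h4.isClique_commonNeighbors_s18 hql_ne hql).subset hsub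

theorem isClique_antitwins_of_mem_antitwins (h4 : IndFree (cycleGraph 4) G)
    (hP : IndFree P4plusP1 G) {i j : Fin 5} (hij : (C₅).Adj i j) {b : V}
    (hb : b ∈ antitwins c j) : G.IsClique (antitwins c i) := by
  obtain ⟨k, l, m, hjk, -, -, hmi, hik, -, hkm, -⟩ := exists_cycleGraph_five_of_adj hij
  have hik_ne : i ≠ k := fun h ↦ hkm (h ▸ hmi.symm)
  have hbk_ne : b ≠ c k := (disjoint_antitwins_twins j k).ne_of_mem hb (apply_mem_twins c k)
  have hbk : ¬ G.Adj b (c k) := fun h ↦ ((hb k).1 h).2 hjk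
  have hsub : antitwins c i ⊆ G.commonNeighbors b (c k) := fun a ha ↦
    ⟨(adj_of_mem_antitwins hP hij ha hb).symm, ((ha k).2 ⟨hik_ne, hik⟩).symm⟩
  exact (h4.isClique_commonNeighbors_s18 hbk_ne hbk).subset hsub

theorem isClique_antitwins_or_exists_isCliqueSeparation (h4 : IndFree (cycleGraph 4) G)
    (hP : IndFree P4plusP1 G) (i : Fin 5) :
    G.IsClique (antitwins c i) ∨ ∃ A B, IsCliqueSeparation G A B := by
  refine or_iff_not_imp_left.2 fun hA ↦ ?_
  obtain ⟨a, ha⟩ : (antitwins c i).Nonempty := by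
    by_contra hempty
    exact hA (by simp [Set.not_nonempty_iff_eq_empty.1 hempty])
  let N : Set V := {v | v ∈ hubs c ∨ ∃ k ≠ i, ¬ (C₅).Adj i k ∧ v ∈ twins c k}
  have hQ := isClique_twins_union_hubs_five (c := c) h4
  have hN : G.IsClique N := by
    rintro u (hu | ⟨k, hk, hik, hu⟩) v (hv | ⟨l, hl, hil, hv⟩) huv
    · exact hQ i (.inr hu) (.inr hv) huv
    · exact hQ l (.inr hu) (.inl hv) huv
    · exact hQ k (.inl hu) (.inr hv) huv
    by_contra hadj
    have hsub : antitwins c i ⊆ G.commonNeighbors u v := fun b hb ↦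
      ⟨(adj_of_mem_antitwins_of_mem_twins hP hk.symm hik hb hu).symm,
        (adj_of_mem_antitwins_of_mem_twins hP hl.symm hil hb hv).symm⟩
    exact hA ((h4.isClique_commonNeighbors_s18 huv hadj).subset hsub)
  refine exists_isCliqueSeparation (K := antitwins c i) ⟨a, ha⟩ hN (fun u hu v hv huv ↦ ?_)
    (z := c i) ?_ ?_
  · rcases mem_hubs_or_twins_or_antitwins_five h4 hP c v with hv' | ⟨k, hk | hk⟩
    · exact .inl hv'
    · refine .inr ⟨k, ?_, fun hik ↦ hA (isClique_antitwins_of_adj_twin h4 hP hik hu hk huv), hk⟩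
      rintro rfl
      exact not_adj_of_mem_antitwins_of_mem_twins h4 hu hk huv
    · have hne : i ≠ k := fun h ↦ hv (h ▸ hk)
      have hik := adj_of_mem_antitwins_of_nonempty h4 hP hne ⟨u, hu⟩ ⟨v, hk⟩
      exact absurd (isClique_antitwins_of_mem_antitwins h4 hP hik hk) hA
  · exact fun h ↦ Set.disjoint_left.1 (disjoint_antitwins_twins i i) h (apply_mem_twins c i)
  · rintro (h | ⟨k, hk, -, h⟩)
    · exact (h i).ne rfl
    · exact Set.disjoint_left.1 (disjoint_twins_five hk) h (apply_mem_twins c i)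

theorem exists_adj_forall_antitwins_eq_empty (h4 : IndFree (cycleGraph 4) G)
    (hP : IndFree P4plusP1 G) (c : C₅ ↪g G) :
    ∃ i j, (C₅).Adj i j ∧ ∀ k, k ≠ i → k ≠ j → antitwins c k = ∅ := by
  classical
  have index_claim (S : Finset (Fin 5)) (hS : ∀ i ∈ S, ∀ j ∈ S, i ≠ j → (C₅).Adj i j) :
      ∃ i j, (C₅).Adj i j ∧ ∀ k, k ≠ i → k ≠ j → k ∉ S := by
    clear h4 hP c
    decide +revert
  have := index_claim {i | (antitwins c i).Nonempty}
  simp only [Finset.mem_filter_univ, Set.not_nonempty_iff_eq_empty] at this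
  exact this fun i hi j hj hij ↦ adj_of_mem_antitwins_of_nonempty h4 hP hij hi hj

theorem treeCliqueCoverNum_le_three_of_isClique_antitwins (h4 : IndFree (cycleGraph 4) G)
    (hP : IndFree P4plusP1 G) (c : C₅ ↪g G) (hA : ∀ i, G.IsClique (antitwins c i)) :
    treeCliqueCoverNum G ≤ 3 := by
  obtain ⟨i, j, hij, hempty⟩ := exists_adj_forall_antitwins_eq_empty h4 hP c
  obtain ⟨k, l, m, hjk, hkl, hlm, hmi, hik, hjl, hkm, hli, hmj, hindex⟩ :=
    exists_cycleGraph_five_of_adj hij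
  have hne : i ≠ k ∧ i ≠ l ∧ j ≠ l ∧ j ≠ m := by grind [SimpleGraph.irrefl, Adj.symm]
  have hQ := isClique_twins_union_hubs_five (c := c) h4
  have hAQ {a x y} := not_adj_of_mem_antitwins_of_mem_twins (c := c) h4 (i := a) (a := x) (q := y)
  have hQQ {a b} (hne : a ≠ b) (hab : ¬ (C₅).Adj a b) {x y} :=
    not_adj_of_mem_twins_five (c := c) h4 hne hab (u := x) (v := y)
  refine treeCliqueCoverNum_le_three_of_five_cliques ?_ (Set.sep_subset _ _) (Set.sep_subset _ _)
    (isClique_antitwins_union h4 hP hij hjk hne.1 (hA i))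
    (isClique_antitwins_union h4 hP hij.symm hmi.symm hne.2.2.2 (hA j))
    (hQ i) ((hQ j).subset Set.subset_union_left) (hQ l) ?_ ?_ ?_
  · refine Set.eq_univ_of_forall fun v ↦ ?_
    simp only [Set.mem_union]
    rcases mem_hubs_or_twins_or_antitwins_five h4 hP c v with hv | ⟨a, hv⟩
    · exact .inr hv
    · have := hempty a
      rcases hindex a with rfl | rfl | rfl | rfl | rfl <;> grind
  · grind [Adj.symm]
  · grind [Adj.symm]
  · simp only [Set.disjoint_union_right]
    exact ⟨⟨(disjoint_antitwins_twins i j).symm, (disjoint_antitwins_twins j j).symm⟩,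
      disjoint_twins_five hne.2.2.1⟩

end Pentagon

section Hexagon

variable {V : Type*} {G : SimpleGraph V}

local notation "C₆" => cycleGraph 6

theorem forall_mem_or_exists_twin_six (S : Finset (Fin 6))
    (hconv : ∀ i, i ∈ S → i + 2 ∈ S → i + 1 ∈ S) (hopp : ∀ i, i ∈ S → i + 3 ∈ S → i + 1 ∈ S)
    (hdom : ∀ i, i ∈ S ∨ i + 1 ∈ S ∨ i + 2 ∈ S ∨ i + 3 ∈ S) :
    (∀ j, j ∈ S) ∨ ∃ i, ∀ j ≠ i, j ∈ S ↔ (C₆).Adj i j := by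
  decide +revert

theorem cycleGraph_six_adj (i : Fin 6) :
    (C₆).Adj i (i + 1) ∧ (C₆).Adj (i + 1) (i + 2) ∧ (C₆).Adj (i + 2) (i + 3) ∧
      (C₆).Adj (i + 3) (i + 4) ∧ (C₆).Adj (i + 4) (i + 5) ∧ (C₆).Adj (i + 5) i := by
  decide +revert

theorem cycleGraph_six_not_adj (i : Fin 6) :
    ¬ (C₆).Adj i (i + 2) ∧ ¬ (C₆).Adj i (i + 3) ∧ ¬ (C₆).Adj i (i + 4) ∧
      ¬ (C₆).Adj (i + 1) (i + 3) ∧ ¬ (C₆).Adj (i + 2) (i + 4) ∧ ¬ (C₆).Adj (i + 2) (i + 5) ∧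
        ¬ (C₆).Adj (i + 3) (i + 5) := by
  decide +revert

variable {c : C₆ ↪g G}

theorem mem_hubs_or_twins_six (h4 : IndFree (cycleGraph 4) G) (h5 : IndFree (cycleGraph 5) G)
    (hP : IndFree P4plusP1 G) (c : C₆ ↪g G) (v : V) : v ∈ hubs c ∨ ∃ i, v ∈ twins c i := by
  classical
  by_cases hv : ∃ i, v = c i
  · obtain ⟨i, rfl⟩ := hv
    exact .inr ⟨i, apply_mem_twins c i⟩
  push Not at hv
  have adj_middle (i : Fin 6) (hi : G.Adj v (c i)) (hi' : G.Adj v (c (i + 2))) :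
      G.Adj v (c (i + 1)) :=
    (adj_or_eq_of_adj_of_adj h4 c (cycleGraph_six_adj i).1 (cycleGraph_six_adj i).2.1
      (by simp) (cycleGraph_six_not_adj i).1 hi hi').resolve_left (hv _)
  have adj_of_opposite (i : Fin 6) (hi : G.Adj v (c i)) (hi' : G.Adj v (c (i + 3))) :
      G.Adj v (c (i + 1)) := by
    by_contra h
    have := adj_middle i hi
    have := cycleGraph_six_adj i
    have := cycleGraph_six_not_adj i
    refine not_nonempty_iff.2 h5 (nonempty_cycleGraph_five_embedding (a := v) (b := c i)
      (c := c (i + 1)) (d := c (i + 2)) (e := c (i + 3)) ?_ ?_ ?_ ?_ ?_ ?_ ?_ ?_ ?_ ?_)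
    all_goals grind [Embedding.map_adj_iff, Adj.symm]
  have exists_adj (i : Fin 6) : G.Adj v (c i) ∨ G.Adj v (c (i + 1)) ∨ G.Adj v (c (i + 2)) ∨
      G.Adj v (c (i + 3)) := by
    have := hP.adj_of_path (a := c i) (b := c (i + 1)) (c := c (i + 2)) (d := c (i + 3)) (e := v)
    grind [cycleGraph_six_adj, cycleGraph_six_not_adj, Embedding.map_adj_iff]
  have := forall_mem_or_exists_twin_six {j | G.Adj v (c j)}
  simp only [Finset.mem_filter_univ] at this
  exact this adj_middle adj_of_opposite exists_adj

theorem isClique_twins_union_hubs_six (h4 : IndFree (cycleGraph 4) G) (i : Fin 6) :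
    G.IsClique (twins c i ∪ hubs c) :=
  isClique_twins_union_hubs h4 c (j := i + 1) (k := i + 5) (by decide +revert)
    (by decide +revert) (by decide +revert) (by decide +revert)

theorem disjoint_twins_six {i j : Fin 6} (hij : i ≠ j) : Disjoint (twins c i) (twins c j) := by
  obtain ⟨k, hki, hkj, hk⟩ : ∃ k, k ≠ i ∧ k ≠ j ∧ ¬ ((C₆).Adj i k ↔ (C₆).Adj j k) := by
    decide +revert
  exact Set.disjoint_left.2 fun v hvi hvj ↦ hk ((hvi k hki).symm.trans (hvj k hkj))

theorem not_adj_of_mem_twins_add_two (h5 : IndFree (cycleGraph 5) G) {i : Fin 6} {u v : V}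
    (hu : u ∈ twins c i) (hv : v ∈ twins c (i + 2)) : ¬ G.Adj u v := by
  intro huv
  have hi := cycleGraph_six_adj i
  have hi' := cycleGraph_six_not_adj i
  refine not_nonempty_iff.2 h5 (nonempty_cycleGraph_five_embedding (a := u) (b := v)
    (c := c (i + 3)) (d := c (i + 4)) (e := c (i + 5)) huv ?_ ?_ ?_ ?_ ?_ ?_ ?_ ?_ ?_)
  all_goals grind [mem_twins, Embedding.map_adj_iff, Adj.symm, SimpleGraph.irrefl]

theorem not_adj_of_mem_twins_add_three (h4 : IndFree (cycleGraph 4) G) {i : Fin 6} {u v : V}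
    (hu : u ∈ twins c i) (hv : v ∈ twins c (i + 3)) : ¬ G.Adj u v := by
  intro huv
  have hi := cycleGraph_six_adj i
  have hi' := cycleGraph_six_not_adj i
  have := h4.chord_of_cycle (a := u) (b := v) (c := c (i + 2)) (d := c (i + 1))
  grind [mem_twins, Embedding.map_adj_iff, Adj.symm, SimpleGraph.irrefl]

theorem not_adj_of_mem_twins_six (h4 : IndFree (cycleGraph 4) G) (h5 : IndFree (cycleGraph 5) G)
    {i j : Fin 6} (hne : i ≠ j) (hij : ¬ (C₆).Adj i j) {u v : V} (hu : u ∈ twins c i)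
    (hv : v ∈ twins c j) : ¬ G.Adj u v := by
  have hcases : j = i + 2 ∨ i = j + 2 ∨ j = i + 3 := by
    clear hu hv
    decide +revert
  rcases hcases with rfl | rfl | rfl
  · exact not_adj_of_mem_twins_add_two h5 hu hv
  · exact fun h ↦ not_adj_of_mem_twins_add_two h5 hv hu h.symm
  · exact not_adj_of_mem_twins_add_three h4 hu hv

theorem treeCliqueCoverNum_le_three_of_cycleGraph_six_embedding (h4 : IndFree (cycleGraph 4) G)
    (h5 : IndFree (cycleGraph 5) G) (hP : IndFree P4plusP1 G) (c : C₆ ↪g G) :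
    treeCliqueCoverNum G ≤ 3 := by
  have hQ := isClique_twins_union_hubs_six (c := c) h4
  have hQQ {i j} (hne : i ≠ j) (hij : ¬ (C₆).Adj i j) : ∀ u ∈ twins c i, ∀ v ∈ twins c j,
      ¬ G.Adj u v := fun u hu v hv ↦ not_adj_of_mem_twins_six h4 h5 hne hij hu hv
  have hclique (i) : G.IsClique (twins c i) := (hQ i).subset Set.subset_union_left
  refine treeCliqueCoverNum_le_three_of_six_cliques ?_ (hQ 0) (hclique 1) (hclique 2)
    (hclique 3) (hclique 4) (hclique 5) (hQQ (by decide) (by decide))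
    (hQQ (by decide) (by decide)) (hQQ (by decide) (by decide)) (hQQ (by decide) (by decide))
    (hQQ (by decide) (by decide)) (hQQ (by decide) (by decide)) (disjoint_twins_six (by decide))
    (disjoint_twins_six (by decide)) (disjoint_twins_six (by decide))
  refine Set.eq_univ_of_forall fun v ↦ ?_
  simp only [Set.mem_union]
  rcases mem_hubs_or_twins_six h4 h5 hP c v with hv | ⟨i, hv⟩
  · exact .inr hv
  · left
    fin_cases i <;> simp_all

end Hexagon

section CliqueSeparations

variable {V : Type*} {G : SimpleGraph V}

theorem treeCliqueCoverNum_le_three_of_not_isCliqueSeparation (hP : IndFree P4plusP1 G)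
    (h4 : IndFree (cycleGraph 4) G) (hsep : ¬ ∃ A B, IsCliqueSeparation G A B) :
    treeCliqueCoverNum G ≤ 3 := by
  by_cases h5 : Nonempty (cycleGraph 5 ↪g G)
  · obtain ⟨c⟩ := h5
    exact treeCliqueCoverNum_le_three_of_isClique_antitwins h4 hP c fun i ↦
      (isClique_antitwins_or_exists_isCliqueSeparation h4 hP i).resolve_right hsep
  by_cases h6 : Nonempty (cycleGraph 6 ↪g G)
  · obtain ⟨c⟩ := h6
    exact treeCliqueCoverNum_le_three_of_cycleGraph_six_embedding h4 (not_nonempty_iff.1 h5) hP c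
  have hclique : G.IsClique Set.univ := by
    intro x _ y _ hxy
    by_contra hadj
    exact (exists_isCliqueSeparation_or_cycleGraph_embedding h4 hP hxy hadj).elim hsep
      (·.elim h5 h6)
  exact treeCliqueCoverNum_le_of_path (n := 0) (fun _ _ ↦ Set.univ) (fun _ _ ↦ hclique)
    (by simp) (by simp) (by simp)

theorem treeCliqueCoverNum_le_three [Finite V] (hP : IndFree P4plusP1 G)
    (h4 : IndFree (cycleGraph 4) G) : treeCliqueCoverNum G ≤ 3 := by
  induction hn : Nat.card V using Nat.strong_induction_on generalizing V with
  | _ n ih =>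
    by_cases hsep : ∃ A B, IsCliqueSeparation G A B
    · obtain ⟨A, B, hAB⟩ := hsep
      have induce_le (S : Set V) (hS : S ≠ Set.univ) : treeCliqueCoverNum (G.induce S) ≤ 3 :=
        ih _ (hn ▸ S.ncard_lt_card hS) (hP.of_embedding (Embedding.induce S))
          (h4.of_embedding (Embedding.induce S)) (Nat.card_coe_set_eq S)
      exact hAB.treeCliqueCoverNum_le.trans
        (max_le (induce_le A hAB.left_ne_univ) (induce_le B hAB.right_ne_univ))
    · exact treeCliqueCoverNum_le_three_of_not_isCliqueSeparation hP h4 hsep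

end CliqueSeparations

/-- If `G` is a `{P_4 + P_1, C_4}`-free graph, then `tree-θ(G) ≤ 3`;
consequently `tree-α(G) ≤ 3` as well. -/
theorem stmt_18 {V : Type} [Finite V] (G : SimpleGraph V)
    (h1 : IndFree P4plusP1 G) (h2 : IndFree (cycleGraph 4) G) :
    treeCliqueCoverNum G ≤ 3 ∧ treeIndepNum G ≤ 3 := by
  have hθ := treeCliqueCoverNum_le_three h1 h2
  exact ⟨hθ, (treeIndepNum_le_treeCliqueCoverNum G).trans hθ⟩
end

section
/- For every integer t ≥ 2, let G_t be the graph obtained from the complete graph with vertex set {v_0, v_1, …, v_t} by subdividing once every edge incident with v_0. Then G_t is P_6-free and C_4-free, and G_t contains K_{2,t} as an induced minor. -/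
open SimpleGraph

/-- The graph `G_t`, obtained from the complete graph on `{v_0, v_1, …, v_t}` by
subdividing once every edge incident with `v_0`. The vertex `inl i` is `v_i`, and the
vertex `inr i` is the subdivision vertex of the edge `v_0 v_{i+1}`. -/
def subdividedClique (t : ℕ) : SimpleGraph (Fin (t + 1) ⊕ Fin t) :=
  SimpleGraph.fromRel (fun x y =>
    match x, y with
    | .inl i, .inl j => i ≠ 0 ∧ j ≠ 0
    | .inl j, .inr i => j = 0 ∨ j = i.succ
    | _, _ => False)

/-!
In `G_t` the neighbours of `v_0` are pairwise nonadjacent and its non-neighbours `v_1, …, v_t` form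
a clique, so `G_t - v_0` is a split graph. Neither `P_6` nor `C_4` is split, hence an induced copy
of either passes through `v_0`. Every vertex of `P_6` has two nonadjacent non-neighbours, which is
impossible for `v_0`; the vertex opposite to `v_0` in a `C_4` would have two common neighbours with
`v_0`, whereas `v_0` and `v_{i+1}` have only one. Contracting the clique of non-neighbours of `v_0`
leaves `K_{2,t}`.
-/

section SplitGraph

variable {V W : Type*} {G : SimpleGraph V} {H : SimpleGraph W} {v : V}

/-- `G` is a split graph: its vertex set is partitioned into an independent set `S` and a clique
`Sᶜ`, either of which may be empty. -/
def IsSplit (G : SimpleGraph V) : Prop :=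
  ∃ S : Set V, G.IsIndepSet S ∧ G.IsClique Sᶜ

theorem not_isSplit_of_two_disjoint_edges {a b c d : V} (hab : G.Adj a b) (hcd : G.Adj c d)
    (hac : ¬G.Adj a c) (had : ¬G.Adj a d) (hbc : ¬G.Adj b c) (hbd : ¬G.Adj b d) :
    ¬IsSplit G := by
  rintro ⟨S, hS, hK⟩
  have exists_notMem {x y : V} (hxy : G.Adj x y) : x ∉ S ∨ y ∉ S := by
    by_contra! h
    exact hS h.1 h.2 hxy.ne hxy
  have ne_of_adj_of_not_adj {x y z : V} (hxy : G.Adj x y) (hyz : ¬G.Adj y z) : x ≠ z := by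
    rintro rfl
    exact hyz hxy.symm
  rcases exists_notMem hab with ha | hb <;> rcases exists_notMem hcd with hc | hd
  · exact hac (hK ha hc (ne_of_adj_of_not_adj hab hbc))
  · exact had (hK ha hd (ne_of_adj_of_not_adj hab hbd))
  · exact hbc (hK hb hc (ne_of_adj_of_not_adj hab.symm hac))
  · exact hbd (hK hb hd (ne_of_adj_of_not_adj hab.symm had))

theorem not_isSplit_of_induced_four_cycle {a b c d : V} (hab : G.Adj a b) (hbc : G.Adj b c)
    (hcd : G.Adj c d) (hda : G.Adj d a) (hac : ¬G.Adj a c) (hbd : ¬G.Adj b d)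
    (hac_ne : a ≠ c) (hbd_ne : b ≠ d) : ¬IsSplit G := by
  rintro ⟨S, hS, hK⟩
  have mem_or_mem {x y : V} (hne : x ≠ y) (hxy : ¬G.Adj x y) : x ∈ S ∨ y ∈ S := by
    by_contra! h
    exact hxy (hK h.1 h.2 hne)
  have not_adj {x y : V} (hx : x ∈ S) (hy : y ∈ S) : ¬G.Adj x y := fun hxy =>
    hS hx hy hxy.ne hxy
  rcases mem_or_mem hac_ne hac with ha | hc <;> rcases mem_or_mem hbd_ne hbd with hb | hd
  · exact not_adj ha hb hab
  · exact not_adj hd ha hda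
  · exact not_adj hb hc hbc
  · exact not_adj hc hd hcd

theorem not_isSplit_cycleGraph_four : ¬IsSplit (cycleGraph 4) :=
  not_isSplit_of_induced_four_cycle (a := 0) (b := 1) (c := 2) (d := 3)
    (by decide) (by decide) (by decide) (by decide) (by decide) (by decide) (by decide) (by decide)

theorem not_isSplit_pathGraph_six : ¬IsSplit (pathGraph 6) := by
  apply not_isSplit_of_two_disjoint_edges (a := 0) (b := 1) (c := 3) (d := 4) <;>
    simp [pathGraph_adj]

/-- Deleting `v` from `G` leaves a split graph whose independent side consists of the neighbours
of `v` and whose clique side consists of the non-neighbours of `v`. An induced subgraph of such a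
`G` that avoids `v` is again split. The set `Gᶜ.neighborSet v` of non-neighbours excludes `v`. -/
structure IsSplitByNeighbors (G : SimpleGraph V) (v : V) : Prop where
  isIndepSet_neighborSet : G.IsIndepSet (G.neighborSet v)
  isClique_compl_neighborSet : G.IsClique (Gᶜ.neighborSet v)

theorem not_isClique_compl_neighborSet_pathGraph_six (k : Fin 6) :
    ¬(pathGraph 6).IsClique ((pathGraph 6)ᶜ.neighborSet k) := by
  intro hK
  have exists_not_adj : ∀ k : Fin 6, ∃ i j, (pathGraph 6)ᶜ.Adj k i ∧ (pathGraph 6)ᶜ.Adj k j ∧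
      (pathGraph 6)ᶜ.Adj i j := by
    simp only [compl_adj, pathGraph_adj]
    decide
  obtain ⟨i, j, hki, hkj, hne, hij⟩ := exists_not_adj k
  exact hij (hK hki hkj hne)

theorem exists_nontrivial_commonNeighbors_cycleGraph_four (k : Fin 4) :
    ∃ l, (cycleGraph 4)ᶜ.Adj k l ∧ ((cycleGraph 4).commonNeighbors k l).Nontrivial := by
  refine ⟨k + 2, by decide +revert, k + 1, ?_, k + 3, ?_, by decide +revert⟩ <;>
    rw [mem_commonNeighbors] <;> decide +revert

namespace IsSplitByNeighbors

theorem isSplit_of_forall_apply_ne (hG : IsSplitByNeighbors G v) (f : H ↪g G)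
    (hv : ∀ k, f k ≠ v) : IsSplit H :=
  ⟨f ⁻¹' G.neighborSet v,
    fun _ hi _ hj hne hij =>
      hG.isIndepSet_neighborSet hi hj (f.injective.ne hne) (f.map_adj_iff.2 hij),
    fun i hi j hj hne => f.map_adj_iff.1 <|
      hG.isClique_compl_neighborSet ⟨(hv i).symm, hi⟩ ⟨(hv j).symm, hj⟩ (f.injective.ne hne)⟩

theorem exists_apply_eq (hG : IsSplitByNeighbors G v) (hH : ¬IsSplit H) (f : H ↪g G) :
    ∃ k, f k = v := by
  by_contra! hv
  exact hH (hG.isSplit_of_forall_apply_ne f hv)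

theorem indFree_pathGraph_six (hG : IsSplitByNeighbors G v) : IndFree (pathGraph 6) G := by
  refine ⟨fun f => ?_⟩
  obtain ⟨k, rfl⟩ := hG.exists_apply_eq not_isSplit_pathGraph_six f
  have hf {i j : Fin 6} (hij : (pathGraph 6)ᶜ.Adj i j) : Gᶜ.Adj (f i) (f j) :=
    (Embedding.complEquiv f).map_adj_iff.2 hij
  exact not_isClique_compl_neighborSet_pathGraph_six k fun _ hi _ hj hne =>
    f.map_adj_iff.1 <|
      hG.isClique_compl_neighborSet (hf hi) (hf hj) (f.injective.ne hne)

theorem indFree_cycleGraph_four (hG : IsSplitByNeighbors G v)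
    (hcommon : ∀ w, Gᶜ.Adj v w → (G.commonNeighbors v w).Subsingleton) :
    IndFree (cycleGraph 4) G := by
  refine ⟨fun f => ?_⟩
  obtain ⟨k, rfl⟩ := hG.exists_apply_eq not_isSplit_cycleGraph_four f
  obtain ⟨l, hkl, i, hi, j, hj, hne⟩ := exists_nontrivial_commonNeighbors_cycleGraph_four k
  exact f.injective.ne hne <| hcommon (f l) ((Embedding.complEquiv f).map_adj_iff.2 hkl)
    ⟨f.map_adj_iff.2 hi.1, f.map_adj_iff.2 hi.2⟩ ⟨f.map_adj_iff.2 hj.1, f.map_adj_iff.2 hj.2⟩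

end IsSplitByNeighbors

end SplitGraph

section InducedMinor

variable {V κ ι : Type*} {G : SimpleGraph V}

theorem inducedMinor_completeBipartiteGraph_of_connected {A : κ → Set V} {s : ι → V}
    (hA_conn : ∀ k, (G.induce (A k)).Connected)
    (hA_disj : Pairwise fun k l => Disjoint (A k) (A l))
    (hA_adj : Pairwise fun k l => ∀ a ∈ A k, ∀ b ∈ A l, ¬G.Adj a b)
    (hs_inj : Function.Injective s) (hs_indep : G.IsIndepSet (Set.range s))
    (hs_notMem : ∀ k i, s i ∉ A k) (hs_adj : ∀ k i, ∃ a ∈ A k, G.Adj a (s i)) :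
    InducedMinor (completeBipartiteGraph κ ι) G := by
  refine ⟨Sum.elim A fun i => {s i}, ?_, ?_, ?_, ?_⟩
  · rintro (k | i)
    · exact Set.nonempty_coe_sort.1 (hA_conn k).nonempty
    · exact Set.singleton_nonempty _
  · rintro (k | i)
    · exact hA_conn k
    · exact Connected.of_subsingleton (G := G.induce {s i})
  · rintro (k | i) (l | j) hne
    · exact hA_disj (by simpa using hne)
    · exact Set.disjoint_singleton_right.2 (hs_notMem k j)
    · exact Set.disjoint_singleton_left.2 (hs_notMem l i)
    · exact Set.disjoint_singleton.2 (hs_inj.ne (by simpa using hne))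
  · rintro (k | i) (l | j) hne
    · simpa using hA_adj (by simpa using hne)
    · simpa using hs_adj k j
    · simpa [G.adj_comm] using hs_adj l i
    · have hij : s i ≠ s j := hs_inj.ne (by simpa using hne)
      simpa using hs_indep (Set.mem_range_self i) (Set.mem_range_self j) hij

end InducedMinor

namespace subdividedClique

variable {t : ℕ}

theorem adj_succ_succ (i j : Fin t) :
    (subdividedClique t).Adj (.inl i.succ) (.inl j.succ) ↔ i ≠ j := by
  simp [subdividedClique]

theorem adj_succ_inr (i j : Fin t) :
    (subdividedClique t).Adj (.inl i.succ) (.inr j) ↔ i = j := by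
  simp [subdividedClique]

theorem not_adj_inr_inr (i j : Fin t) : ¬(subdividedClique t).Adj (.inr i) (.inr j) := by
  simp [subdividedClique]

theorem neighborSet_zero : (subdividedClique t).neighborSet (.inl 0) = Set.range .inr := by
  ext (i | i) <;> simp [subdividedClique]

theorem compl_neighborSet_zero :
    (subdividedClique t)ᶜ.neighborSet (.inl 0) = Set.range fun i : Fin t => .inl i.succ := by
  ext (i | i)
  · cases i using Fin.cases <;> simp [subdividedClique, eq_comm]
  · simp [subdividedClique]

theorem commonNeighbors_zero_succ (i : Fin t) :
    (subdividedClique t).commonNeighbors (.inl 0) (.inl i.succ) = {.inr i} := by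
  rw [commonNeighbors, neighborSet_zero]
  ext (j | j) <;> simp [adj_succ_inr, eq_comm]

theorem isSplitByNeighbors_zero : IsSplitByNeighbors (subdividedClique t) (.inl 0) where
  isIndepSet_neighborSet := by
    rw [neighborSet_zero]
    rintro _ ⟨i, rfl⟩ _ ⟨j, rfl⟩ -
    exact not_adj_inr_inr i j
  isClique_compl_neighborSet := by
    rw [compl_neighborSet_zero]
    rintro _ ⟨i, rfl⟩ _ ⟨j, rfl⟩ hne
    exact (adj_succ_succ i j).2 fun hij => hne (by rw [hij])

theorem indFree_cycleGraph_four : IndFree (cycleGraph 4) (subdividedClique t) := by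
  refine isSplitByNeighbors_zero.indFree_cycleGraph_four fun w hw => ?_
  obtain ⟨i, rfl⟩ := compl_neighborSet_zero.subset hw
  rw [commonNeighbors_zero_succ]
  exact Set.subsingleton_singleton

theorem connected_induce_compl_neighborSet_zero [Nonempty (Fin t)] :
    ((subdividedClique t).induce ((subdividedClique t)ᶜ.neighborSet (.inl 0))).Connected := by
  rw [induce_eq_top.2 isSplitByNeighbors_zero.isClique_compl_neighborSet, compl_neighborSet_zero]
  exact connected_top

theorem inducedMinor_completeBipartiteGraph [Nonempty (Fin t)] :
    InducedMinor (completeBipartiteGraph (Fin 2) (Fin t)) (subdividedClique t) := by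
  let A : Fin 2 → Set (Fin (t + 1) ⊕ Fin t) :=
    ![{.inl 0}, (subdividedClique t)ᶜ.neighborSet (.inl 0)]
  apply inducedMinor_completeBipartiteGraph_of_connected (A := A) (s := .inr)
  · rw [Fin.forall_fin_two]
    exact ⟨Connected.of_subsingleton (G := (subdividedClique t).induce {.inl 0}),
      connected_induce_compl_neighborSet_zero⟩
  · simp [A, Pairwise, Fin.forall_fin_two]
  · simp +contextual [A, Pairwise, Fin.forall_fin_two, adj_comm]
  · exact Sum.inr_injective
  · exact neighborSet_zero ▸ isSplitByNeighbors_zero.isIndepSet_neighborSet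
  · simp [A, compl_neighborSet_zero, Fin.forall_fin_two]
  · rw [Fin.forall_fin_two]
    refine ⟨fun i => ⟨_, rfl, neighborSet_zero.superset ⟨i, rfl⟩⟩, fun i => ?_⟩
    exact ⟨_, compl_neighborSet_zero.superset ⟨i, rfl⟩, (adj_succ_inr i i).2 rfl⟩

end subdividedClique

/-- For every integer `t ≥ 2`, the graph `G_t` obtained from the complete
graph on `{v_0, …, v_t}` by subdividing once every edge incident with `v_0` is `P_6`-free
and `C_4`-free, and contains `K_{2,t}` as an induced minor. -/
theorem stmt_19 (t : ℕ) (ht : 2 ≤ t) :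
    IndFree (pathGraph 6) (subdividedClique t) ∧
    IndFree (cycleGraph 4) (subdividedClique t) ∧
    InducedMinor (completeBipartiteGraph (Fin 2) (Fin t)) (subdividedClique t) := by
  have : Nonempty (Fin t) := ⟨⟨0, by lia⟩⟩
  exact ⟨subdividedClique.isSplitByNeighbors_zero.indFree_pathGraph_six,
    subdividedClique.indFree_cycleGraph_four,
    subdividedClique.inducedMinor_completeBipartiteGraph⟩
end
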